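/- arXiv:1704.06430 — 2 statements merged into one kernel-verified Lean document; each statement's English description precedes it below -/
import Mathlib

section
/- Let N ≥ 1 and Λ > 1. Let (u, v) be a classical solution of the system (P_Λ) with u ≥ 0 and v ≥ 0 on ℝ^N, satisfying condition (h∞). Then for every unit vector ν ∈ ℝ^N with ν·e_N > 0, the directional derivatives satisfy ∂_ν u > 0 and ∂_ν v < 0 at every point of ℝ^N. -/
/-!
The proof is the sliding method, with every compactness argument replaced by an explicit estimate
that only uses the maximum principle (no elliptic regularity theory is needed).

*A priori bounds.* Since `Λ > 1`, the function `s = u² + v²` satisfies `Δs ≥ 2 s (s - 1)`, and a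
Keller–Osserman barrier on large balls gives `s ≤ 1` (`le_one_of_lap_ge`). Then `Δu` and `Δv` are
bounded, and Brandt's argument, which is a maximum principle for `u (x + s e) - u (x - s e)` in the
variables `(x, s)`, shows that `u` and `v` are Lipschitz (`brandt`, `abs_sub_le_of_lap`).

*Sliding.* For `t ≥ 0` put `w = u(· + tν) - u` and `z = v - v(· + tν)`. The pair solves a
cooperative linear system whose diagonal is strictly dominant and negative wherever `w` or `z` is
negative and either `(u, v)` is close to `(0, 1)` or `(u, v)(· + tν)` is close to `(1, 0)`
(`reaction_coercive`). Hence `w, z ≥ 0` everywhere as soon as this holds on a fixed strip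
`|x_N| < M` (`cooperative_max_principle`); for large `t` nothing has to be checked on the strip.
If `w, z ≥ 0` for some `t > 0`, then a Gaussian barrier (`exists_lower_bound`), started at a point
where one step of the telescoping sum `∑ (u(x + (k+1)tν) - u(x + ktν))` is not small, gives a
positive lower bound for `w` and `z` on the strip (`exists_strip_bound`). By the Lipschitz bound
the order persists on the strip for slightly smaller `t`, so it holds for all `t ≥ 0`.

*Strict sign.* The same Gaussian barrier, applied to `u(· + tν) - u` with a lower bound linear in
`t` near a point where `∂_ν u > 0`, gives `∂_ν u > 0` everywhere (`fderiv_pos_of_monotone`), and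
likewise for `-v`.
-/

open scoped RealInnerProductSpace
open Filter

noncomputable section

/-- The Laplacian of `f : ℝ^N → ℝ`, as the sum of the pure second partial
derivatives in the coordinate directions. -/
def lap (N : ℕ) (f : EuclideanSpace ℝ (Fin N) → ℝ) (x : EuclideanSpace ℝ (Fin N)) : ℝ :=
  ∑ i : Fin N,
    fderiv ℝ (fun y => fderiv ℝ f y (EuclideanSpace.single i 1)) x (EuclideanSpace.single i 1)

/-- `(u, v)` is a classical solution of the system `(P_Λ)` on `ℝ^N`:
`u, v` are `C²` and `-Δu = u - u³ - Λ u v²`, `-Δv = v - v³ - Λ u² v` pointwise. -/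
def IsSolution (N : ℕ) (Λ : ℝ) (u v : EuclideanSpace ℝ (Fin N) → ℝ) : Prop :=
  ContDiff ℝ 2 u ∧ ContDiff ℝ 2 v ∧
  (∀ x, -lap N u x = u x - (u x) ^ 3 - Λ * u x * (v x) ^ 2) ∧
  (∀ x, -lap N v x = v x - (v x) ^ 3 - Λ * (u x) ^ 2 * v x)

/-- Condition `(h∞)`: `u → 1`, `v → 0` as `x_N → +∞` and `u → 0`, `v → 1` as
`x_N → -∞`, uniformly with respect to `x' ∈ ℝ^{N-1}` (the dimension is `N + 1`). -/
def Hinf (N : ℕ) (u v : EuclideanSpace ℝ (Fin (N + 1)) → ℝ) : Prop :=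
  (∀ ε : ℝ, 0 < ε → ∃ M : ℝ, ∀ x : EuclideanSpace ℝ (Fin (N + 1)),
    M ≤ x (Fin.last N) → |u x - 1| < ε ∧ |v x| < ε) ∧
  (∀ ε : ℝ, 0 < ε → ∃ M : ℝ, ∀ x : EuclideanSpace ℝ (Fin (N + 1)),
    x (Fin.last N) ≤ M → |u x| < ε ∧ |v x - 1| < ε)

/-! ### Second derivatives and the Laplacian -/

/-- The Euclidean space `ℝ^n`. -/
abbrev Euc (n : ℕ) := EuclideanSpace ℝ (Fin n)

/-- Second derivative of `f` at `x`, twice in the direction `e`. -/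
def D2 {n : ℕ} (f : Euc n → ℝ) (x e : Euc n) : ℝ :=
  fderiv ℝ (fun y => fderiv ℝ f y e) x e

lemma lap_eq {n : ℕ} (f : Euc n → ℝ) (x : Euc n) :
    lap n f x = ∑ i : Fin n, D2 f x (EuclideanSpace.single i 1) := rfl

/-- Second-order necessary condition at a local minimum. No differentiability is assumed: if the
second derivative were negative, the sufficient condition would make `a` a local maximum as well,
so `f` would be locally constant. -/
lemma second_deriv_nonneg {f : ℝ → ℝ} {a : ℝ} (hmin : IsLocalMin f a) (hc : ContinuousAt f a) :
    0 ≤ deriv (deriv f) a := by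
  by_contra h
  push Not at h
  have h1 : IsLocalMin (-f) a := by
    apply isLocalMin_of_deriv_deriv_pos
    · have : deriv (-f) = - deriv f := by ext; simp
      rw [this, deriv.neg]; simpa using h
    · simp [hmin.deriv_eq_zero]
    · exact hc.neg
  have h2 : f =ᶠ[nhds a] fun _ => f a := by
    filter_upwards [hmin, h1] with y h3 h4
    simp only [Pi.neg_apply, neg_le_neg_iff] at h4
    exact le_antisymm h4 h3
  have h3 : deriv f =ᶠ[nhds a] fun _ => 0 := by
    have := h2.deriv
    simpa using this
  have h4 := h3.deriv_eq
  simp at h4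
  linarith

lemma eventually_differentiableAt {n : ℕ} {f : Euc n → ℝ} {x : Euc n} (hf : ContDiffAt ℝ 2 f x) :
    ∀ᶠ y in nhds x, DifferentiableAt ℝ f y := by
  filter_upwards [hf.eventually (by simp)] with y hy
  exact hy.differentiableAt (by simp)

lemma differentiableAt_fderiv {n : ℕ} {f : Euc n → ℝ} {x : Euc n} (hf : ContDiffAt ℝ 2 f x)
    (e : Euc n) : DifferentiableAt ℝ (fun y => fderiv ℝ f y e) x := by
  have h : ContDiffAt ℝ 1 (fderiv ℝ f) x := hf.fderiv_right (by norm_num)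
  exact (h.differentiableAt (by simp)).clm_apply (differentiableAt_const e)

lemma deriv_line {n : ℕ} {f : Euc n → ℝ} {x : Euc n} (hf : ContDiffAt ℝ 2 f x) (e : Euc n) :
    deriv (fun s : ℝ => f (x + s • e)) =ᶠ[nhds 0] fun s => fderiv ℝ f (x + s • e) e := by
  have hc : Tendsto (fun s : ℝ => x + s • e) (nhds 0) (nhds x) := by
    have : Continuous (fun s : ℝ => x + s • e) := by fun_prop
    simpa using this.tendsto 0
  filter_upwards [hc.eventually (eventually_differentiableAt hf)] with s hs
  have hl : HasDerivAt (fun s : ℝ => x + s • e) e s := by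
    simpa using ((hasDerivAt_id s).smul_const e).const_add x
  exact (hs.hasFDerivAt.comp_hasDerivAt s hl).deriv

lemma hasDerivAt_deriv_line {n : ℕ} {f : Euc n → ℝ} {x : Euc n} (hf : ContDiffAt ℝ 2 f x)
    (e : Euc n) : HasDerivAt (deriv (fun s : ℝ => f (x + s • e))) (D2 f x e) 0 := by
  have hl : HasDerivAt (fun s : ℝ => x + s • e) e 0 := by
    simpa using ((hasDerivAt_id (0:ℝ)).smul_const e).const_add x
  have h0 : HasFDerivAt (fun y => fderiv ℝ f y e) (fderiv ℝ (fun y => fderiv ℝ f y e) x)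
      (x + (0:ℝ) • e) := by
    simpa using (differentiableAt_fderiv hf e).hasFDerivAt
  have h1 : HasDerivAt (fun s : ℝ => fderiv ℝ f (x + s • e) e) (D2 f x e) 0 := by
    have h2 := h0.comp_hasDerivAt (0:ℝ) hl
    exact h2
  exact h1.congr_of_eventuallyEq (deriv_line hf e)

lemma D2_nonneg_of_isLocalMin {n : ℕ} {f : Euc n → ℝ} {x : Euc n} (hf : ContDiffAt ℝ 2 f x)
    (hmin : IsLocalMin f x) (e : Euc n) : 0 ≤ D2 f x e := by
  rw [← (hasDerivAt_deriv_line hf e).deriv]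
  have hc : ContinuousAt (fun s : ℝ => x + s • e) 0 := by fun_prop
  apply second_deriv_nonneg
  · have : Tendsto (fun s : ℝ => x + s • e) (nhds 0) (nhds x) := by simpa using hc.tendsto
    have h := this.eventually hmin
    filter_upwards [h] with s hs
    simpa using hs
  · apply ContinuousAt.comp (g := f) _ hc
    simpa using hf.continuousAt

lemma lap_nonneg_of_isLocalMin {n : ℕ} {f : Euc n → ℝ} {x : Euc n} (hf : ContDiffAt ℝ 2 f x)
    (hmin : IsLocalMin f x) : 0 ≤ lap n f x := by
  rw [lap_eq]
  exact Finset.sum_nonneg fun i _ => D2_nonneg_of_isLocalMin hf hmin _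

lemma D2_sub {n : ℕ} {f g : Euc n → ℝ} {x : Euc n} (hf : ContDiffAt ℝ 2 f x)
    (hg : ContDiffAt ℝ 2 g x) (e : Euc n) :
    D2 (fun y => f y - g y) x e = D2 f x e - D2 g x e := by
  unfold D2
  have h : (fun y => fderiv ℝ (fun y => f y - g y) y e) =ᶠ[nhds x]
      fun y => fderiv ℝ f y e - fderiv ℝ g y e := by
    filter_upwards [eventually_differentiableAt hf, eventually_differentiableAt hg] with y h1 h2
    rw [fderiv_fun_sub h1 h2]; rfl
  rw [h.fderiv_eq, fderiv_fun_sub (differentiableAt_fderiv hf e) (differentiableAt_fderiv hg e)]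
  rfl

lemma lap_sub {n : ℕ} {f g : Euc n → ℝ} {x : Euc n} (hf : ContDiffAt ℝ 2 f x)
    (hg : ContDiffAt ℝ 2 g x) : lap n (fun y => f y - g y) x = lap n f x - lap n g x := by
  simp only [lap_eq, D2_sub hf hg, Finset.sum_sub_distrib]

lemma lap_le_of_isLocalMin_sub {n : ℕ} {f g : Euc n → ℝ} {x : Euc n} (hf : ContDiffAt ℝ 2 f x)
    (hg : ContDiffAt ℝ 2 g x) (hmin : IsLocalMin (fun y => f y - g y) x) :
    lap n g x ≤ lap n f x := by
  have := lap_nonneg_of_isLocalMin (hf.sub hg) hmin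
  have h2 := lap_sub hf hg
  linarith

/-- `Δ(f²) = 2 f Δf + 2 |∇f|² ≥ 2 f Δf`. -/
lemma two_mul_le_lap_sq {n : ℕ} {f : Euc n → ℝ} (hf : ContDiff ℝ 2 f) (x : Euc n) :
    2 * f x * lap n f x ≤ lap n (fun y => f y ^ 2) x := by
  rw [lap_eq, lap_eq, Finset.mul_sum]
  apply Finset.sum_le_sum
  intro i _
  generalize (EuclideanSpace.single i (1:ℝ)) = e
  unfold D2
  have hd : Differentiable ℝ f := hf.differentiable (by simp)
  have h : (fun y => fderiv ℝ (fun y => f y ^ 2) y e) = fun y => 2 * f y * fderiv ℝ f y e := by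
    ext y
    rw [fderiv_fun_pow 2 (hd y)]
    simp
  have h2 := differentiableAt_fderiv hf.contDiffAt e (x := x)
  rw [h, fderiv_fun_mul ((hd x).const_mul 2) h2, fderiv_const_mul (hd x)]
  simp only [add_apply, smul_apply, smul_eq_mul]
  nlinarith [sq_nonneg (fderiv ℝ f x e)]

lemma lap_add {n : ℕ} {f g : Euc n → ℝ} {x : Euc n} (hf : ContDiffAt ℝ 2 f x)
    (hg : ContDiffAt ℝ 2 g x) : lap n (fun y => f y + g y) x = lap n f x + lap n g x := by
  have h := lap_sub (f := fun y => f y + g y) (hf.add hg) hg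
  simp only [add_sub_cancel_right] at h
  change lap n f x = _ at h
  linarith

/-- The pure second derivatives of a radial function `φ(|z - y|²)`; the profile need only be
differentiable near `|x - y|²`. -/
lemma D2_radial {n : ℕ} (y x : Euc n) {φ dφ : ℝ → ℝ} {ddφ : ℝ}
    (h1 : ∀ᶠ r in nhds (‖x - y‖ ^ 2), HasDerivAt φ (dφ r) r)
    (h2 : HasDerivAt dφ ddφ (‖x - y‖ ^ 2)) (i : Fin n) :
    D2 (fun z => φ (‖z - y‖ ^ 2)) x (EuclideanSpace.single i 1)
      = 4 * (x - y) i ^ 2 * ddφ + 2 * dφ (‖x - y‖ ^ 2) := by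
  have hq : ∀ z, HasFDerivAt (fun z : Euc n => ‖z - y‖ ^ 2) (2 • innerSL ℝ (z - y)) z := by
    intro z
    have := ((hasFDerivAt_id z).sub_const y).norm_sq
    simpa using this
  unfold D2
  have hev : (fun z => fderiv ℝ (fun z => φ (‖z - y‖ ^ 2)) z (EuclideanSpace.single i 1))
      =ᶠ[nhds x] fun z => dφ (‖z - y‖ ^ 2) * (2 * (z i - y i)) := by
    have hc : Tendsto (fun z : Euc n => ‖z - y‖ ^ 2) (nhds x) (nhds (‖x - y‖ ^ 2)) :=
      (hq x).continuousAt
    filter_upwards [hc.eventually h1] with z hz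
    have h : HasFDerivAt (fun z => φ (‖z - y‖ ^ 2)) (dφ (‖z - y‖ ^ 2) • 2 • innerSL ℝ (z - y)) z :=
      hz.comp_hasFDerivAt z (hq z)
    rw [h.fderiv]
    simp [EuclideanSpace.inner_single_right]
  rw [hev.fderiv_eq]
  have hco : HasFDerivAt (fun z : Euc n => 2 * (z i - y i))
      ((2:ℝ) • (EuclideanSpace.proj i : Euc n →L[ℝ] ℝ)) x := by
    have := ((EuclideanSpace.proj i : Euc n →L[ℝ] ℝ).hasFDerivAt (x := x)).sub_const (y i)
    exact this.const_mul 2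
  have h3 : HasFDerivAt (fun z => dφ (‖z - y‖ ^ 2)) (ddφ • 2 • innerSL ℝ (x - y)) x :=
    h2.comp_hasFDerivAt x (hq x)
  rw [(h3.fun_mul hco).fderiv]
  simp [EuclideanSpace.inner_single_right]
  ring

lemma lap_radial {n : ℕ} (y x : Euc n) {φ dφ : ℝ → ℝ} {ddφ : ℝ}
    (h1 : ∀ᶠ r in nhds (‖x - y‖ ^ 2), HasDerivAt φ (dφ r) r)
    (h2 : HasDerivAt dφ ddφ (‖x - y‖ ^ 2)) :
    lap n (fun z => φ (‖z - y‖ ^ 2)) x = 4 * ‖x - y‖ ^ 2 * ddφ + 2 * n * dφ (‖x - y‖ ^ 2) := by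
  rw [lap_eq, Finset.sum_congr rfl fun i _ => D2_radial y x h1 h2 i, Finset.sum_add_distrib,
    ← Finset.sum_mul, ← Finset.mul_sum, EuclideanSpace.norm_sq_eq]
  simp
  ring

lemma D2_mul_norm_sq {n : ℕ} (ε : ℝ) (x : Euc n) (i : Fin n) :
    D2 (fun z => ε * ‖z‖ ^ 2) x (EuclideanSpace.single i 1) = 2 * ε := by
  have := D2_radial (0 : Euc n) x (φ := fun r => ε * r) (dφ := fun _ => ε) (ddφ := 0)
    (Eventually.of_forall fun r => by simpa using (hasDerivAt_id r).const_mul ε)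
    (hasDerivAt_const _ _) i
  simpa using this

lemma lap_mul_norm_sq {n : ℕ} (ε : ℝ) (x : Euc n) :
    lap n (fun z => ε * ‖z‖ ^ 2) x = 2 * n * ε := by
  simp only [lap_eq, D2_mul_norm_sq]
  simp
  ring

lemma D2_comp_add {n : ℕ} (f : Euc n → ℝ) (a x e : Euc n) :
    D2 (fun y => f (y + a)) x e = D2 f (x + a) e := by
  simp only [D2, fderiv_comp_add_right]
  rw [fderiv_comp_add_right (f := fun y => fderiv ℝ f y e)]

lemma D2_neg_dir {n : ℕ} (f : Euc n → ℝ) (x e : Euc n) : D2 f x (-e) = D2 f x e := by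
  simp [D2, fderiv_fun_neg]

lemma lap_comp_add {n : ℕ} (f : Euc n → ℝ) (a x : Euc n) :
    lap n (fun y => f (y + a)) x = lap n f (x + a) := by
  simp only [lap_eq, D2_comp_add]

/-! ### Barriers -/

/-- Keller–Osserman bound, with no growth assumption on `s`. On the ball of radius `R` about `x₀`,
let `m` be the maximum of `(s - 1) (R² - |x - x₀|²)²`; the function `1 + m / (R² - |x - x₀|²)²`
touches `s` from above, and comparing Laplacians there gives `m ≤ (12 + 2 n) R²`. Let `R → ∞`. -/
lemma le_one_of_lap_ge {n : ℕ} {s : Euc n → ℝ} (hs : ContDiff ℝ 2 s)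
    (h : ∀ x, 2 * s x * (s x - 1) ≤ lap n s x) (x₀ : Euc n) : s x₀ ≤ 1 := by
  have key : ∀ R : ℝ, 0 < R → (s x₀ - 1) * R ^ 2 ≤ 12 + 2 * n := by
    intro R hR
    by_contra hcon
    push Not at hcon
    set D : Euc n → ℝ := fun x => R ^ 2 - ‖x - x₀‖ ^ 2 with hD
    have hsc := hs.continuous
    have hGc : Continuous fun x => (s x - 1) * D x ^ 2 := by
      simp only [hD]; fun_prop
    obtain ⟨x, hx, hmax⟩ := (isCompact_closedBall x₀ R).exists_isMaxOn
      ⟨x₀, by simp [hR.le]⟩ hGc.continuousOn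
    set m := (s x - 1) * D x ^ 2 with hm
    have hm1 : (12 + 2 * n) * R ^ 2 < m := by
      have h1 : (s x₀ - 1) * D x₀ ^ 2 ≤ m := hmax (by simp [hR.le])
      have h2 : D x₀ = R ^ 2 := by simp [hD]
      rw [h2] at h1
      nlinarith [pow_pos hR 2]
    have hmpos : 0 < m := lt_of_le_of_lt (by positivity) hm1
    have hnn : 0 ≤ ‖x - x₀‖ := norm_nonneg _
    have hxR : ‖x - x₀‖ ≤ R := by simpa [dist_eq_norm] using hx
    have hDpos : 0 < D x := by
      have h0 : 0 ≤ D x := by simp only [hD]; nlinarith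
      rcases h0.eq_or_lt with h0 | h0
      · rw [← h0] at hm; simp at hm; linarith
      · exact h0
    have hlt : ‖x - x₀‖ < R := by
      simp only [hD] at hDpos
      nlinarith
    -- the radial barrier that touches `s` from above at `x`
    set φ : ℝ → ℝ := fun r => 1 + m * ((R ^ 2 - r) ^ 2)⁻¹ with hφ
    have hφd : ∀ r, R ^ 2 - r ≠ 0 → HasDerivAt φ (2 * m * ((R ^ 2 - r) ^ 3)⁻¹) r := by
      intro r hr
      have h1 : HasDerivAt (fun r : ℝ => R ^ 2 - r) (-1) r := by
        simpa using (hasDerivAt_id r).const_sub (R ^ 2)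
      have h2 := (((h1.pow 2).inv (pow_ne_zero 2 hr)).const_mul m).const_add 1
      refine HasDerivAt.congr_deriv h2 ?_
      simp
      field_simp
    have hφd2 : ∀ r, R ^ 2 - r ≠ 0 →
        HasDerivAt (fun r => 2 * m * ((R ^ 2 - r) ^ 3)⁻¹) (6 * m * ((R ^ 2 - r) ^ 4)⁻¹) r := by
      intro r hr
      have h1 : HasDerivAt (fun r : ℝ => R ^ 2 - r) (-1) r := by
        simpa using (hasDerivAt_id r).const_sub (R ^ 2)
      have h2 := (((h1.pow 3).inv (pow_ne_zero 3 hr)).const_mul (2 * m))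
      refine HasDerivAt.congr_deriv h2 ?_
      simp
      field_simp
      norm_num
    have hev : ∀ᶠ r in nhds (‖x - x₀‖ ^ 2), R ^ 2 - r ≠ 0 := by
      have : ContinuousAt (fun r : ℝ => R ^ 2 - r) (‖x - x₀‖ ^ 2) := by fun_prop
      exact this.eventually_ne hDpos.ne'
    have hlap := lap_radial x₀ x (hev.mono hφd) (hφd2 _ hDpos.ne')
    have hcd : ContDiffAt ℝ 2 (fun z => φ (‖z - x₀‖ ^ 2)) x := by
      simp only [hφ]
      have h1 : ContDiff ℝ 2 (fun z : Euc n => ‖z - x₀‖ ^ 2) :=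
        (contDiff_id.sub contDiff_const).norm_sq ℝ
      have h2 : ContDiffAt ℝ 2 (fun z : Euc n => (R ^ 2 - ‖z - x₀‖ ^ 2) ^ 2) x :=
        ((contDiff_const.sub h1).pow 2).contDiffAt
      exact contDiffAt_const.add (contDiffAt_const.mul (h2.inv (pow_ne_zero 2 hDpos.ne')))
    have hmin : IsLocalMin (fun z => φ (‖z - x₀‖ ^ 2) - s z) x := by
      have hball : Metric.ball x₀ R ∈ nhds x :=
        Metric.isOpen_ball.mem_nhds (by simpa [dist_eq_norm] using hlt)
      filter_upwards [hball] with z hz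
      have hz' : ‖z - x₀‖ < R := by simpa [dist_eq_norm] using hz
      have hz1 : (s z - 1) * D z ^ 2 ≤ m := hmax (Metric.ball_subset_closedBall hz)
      have hDz : 0 < D z := by simp only [hD]; nlinarith [norm_nonneg (z - x₀)]
      have e1 : φ (‖x - x₀‖ ^ 2) = s x := by
        change 1 + m * (D x ^ 2)⁻¹ = s x
        rw [hm]; field_simp; ring
      have e2 : s z - 1 ≤ m * (D z ^ 2)⁻¹ := by
        rw [← div_eq_mul_inv, le_div_iff₀ (by positivity)]; exact hz1
      have e3 : φ (‖z - x₀‖ ^ 2) = 1 + m * (D z ^ 2)⁻¹ := rfl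
      rw [e1, e3]; linarith
    have hle := lap_le_of_isLocalMin_sub hcd hs.contDiffAt hmin
    rw [hlap] at hle
    have hx2 := h x
    have hsx : s x - 1 = m * (D x ^ 2)⁻¹ := by rw [hm]; field_simp
    have hfin : 2 * s x * (s x - 1) ≤ 4 * ‖x - x₀‖ ^ 2 * (6 * m * (D x ^ 4)⁻¹)
        + 2 * n * (2 * m * (D x ^ 3)⁻¹) := hx2.trans hle
    have hp : 0 < m * (D x ^ 2)⁻¹ := by positivity
    have h5 : 2 * (m * (D x ^ 2)⁻¹) ^ 2 ≤ 4 * ‖x - x₀‖ ^ 2 * (6 * m * (D x ^ 4)⁻¹)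
        + 2 * n * (2 * m * (D x ^ 3)⁻¹) := by
      refine le_trans ?_ hfin
      nlinarith
    have h6 : 2 * (m * (D x ^ 2)⁻¹) ^ 2 = (2 * m * m) / D x ^ 4 := by field_simp
    have h7 : 4 * ‖x - x₀‖ ^ 2 * (6 * m * (D x ^ 4)⁻¹) + 2 * n * (2 * m * (D x ^ 3)⁻¹)
        = (2 * m * (12 * ‖x - x₀‖ ^ 2 + 2 * n * D x)) / D x ^ 4 := by field_simp; ring
    rw [h6, h7, div_le_div_iff_of_pos_right (by positivity)] at h5
    have h8 : m ≤ 12 * ‖x - x₀‖ ^ 2 + 2 * n * D x := by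
      have : 0 < 2 * m := by linarith
      exact le_of_mul_le_mul_left h5 this
    have h9 : ‖x - x₀‖ ^ 2 ≤ R ^ 2 := by nlinarith
    have h10 : D x ≤ R ^ 2 := by simp only [hD]; nlinarith
    have h11 : 2 * n * D x ≤ 2 * n * R ^ 2 := by gcongr
    linarith
  by_contra hcon
  push Not at hcon
  have hpos : 0 < s x₀ - 1 := by linarith
  have h1 := key (Real.sqrt ((13 + 2 * n) / (s x₀ - 1))) (Real.sqrt_pos.2 (by positivity))
  rw [Real.sq_sqrt (by positivity), mul_div_cancel₀ _ hpos.ne'] at h1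
  linarith

/-- Quantitative strong maximum principle: a nonnegative `w` with `Δw ≤ K w` that is at least `δ` on
a ball of radius `r` is at least `c δ` on the concentric ball of radius `R`, where `c` depends only
on `n`, `K`, `r`, `R`. The barrier is `δ (exp (-α |x - y|²) - exp (-4 α R²))` with `α` so large that
it is a strict subsolution outside the ball of radius `r`. -/
lemma exists_lower_bound (n : ℕ) {K r R : ℝ} (hK : 0 ≤ K) (hr : 0 < r) (hrR : r < R) :
    ∃ c : ℝ, 0 < c ∧ ∀ w : Euc n → ℝ, ContDiff ℝ 2 w → (∀ x, 0 ≤ w x) →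
      (∀ x, lap n w x ≤ K * w x) → ∀ (y : Euc n) (δ : ℝ), 0 < δ →
      (∀ x, ‖x - y‖ ≤ r → δ ≤ w x) → ∀ x, ‖x - y‖ ≤ R → c * δ ≤ w x := by
  have hR : 0 < R := hr.trans hrR
  set α : ℝ := (2 * n + K + 1) / (4 * r ^ 2) + 1 with hα
  have hα1 : 1 ≤ α := by
    have : 0 ≤ (2 * n + K + 1) / (4 * r ^ 2) := by positivity
    linarith
  have hαr : 2 * n + K + 1 ≤ 4 * r ^ 2 * α := by
    rw [hα, mul_add, mul_div_cancel₀ _ (by positivity)]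
    nlinarith
  refine ⟨Real.exp (-α * R ^ 2) - Real.exp (-α * (2 * R) ^ 2), ?_, ?_⟩
  · rw [sub_pos, Real.exp_lt_exp]
    nlinarith [mul_pos (lt_of_lt_of_le one_pos hα1) (pow_pos hR 2)]
  intro w hw hw0 hwl y δ hδ hball
  set b := Real.exp (-α * (2 * R) ^ 2) with hb
  have hbpos : 0 < b := Real.exp_pos _
  set φ : ℝ → ℝ := fun q => δ * (Real.exp (-α * q) - b) with hφ
  have hφd : ∀ q, HasDerivAt φ (δ * (-α * Real.exp (-α * q))) q := by
    intro q
    have h1 : HasDerivAt (fun q : ℝ => -α * q) (-α) q := by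
      simpa using (hasDerivAt_id q).const_mul (-α)
    refine HasDerivAt.congr_deriv ((h1.exp.sub_const b).const_mul δ) ?_
    ring
  have hφd2 : ∀ q, HasDerivAt (fun q => δ * (-α * Real.exp (-α * q)))
      (δ * (α ^ 2 * Real.exp (-α * q))) q := by
    intro q
    have h1 : HasDerivAt (fun q : ℝ => -α * q) (-α) q := by
      simpa using (hasDerivAt_id q).const_mul (-α)
    refine HasDerivAt.congr_deriv ((h1.exp.const_mul (-α)).const_mul δ) ?_
    ring
  have hq : ContDiff ℝ 2 (fun z : Euc n => ‖z - y‖ ^ 2) :=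
    (contDiff_id.sub contDiff_const).norm_sq ℝ
  have hcd : ContDiff ℝ 2 (fun z => φ (‖z - y‖ ^ 2)) := by
    simp only [hφ]
    exact contDiff_const.mul ((Real.contDiff_exp.comp (contDiff_const.mul hq)).sub contDiff_const)
  have hwc := hw.continuous
  have hcc := hcd.continuous
  obtain ⟨x, hx, hmin⟩ := (isCompact_closedBall y (2 * R)).exists_isMinOn
      ⟨y, by simp [hR.le]⟩ (hwc.sub hcc).continuousOn
  have hnn := norm_nonneg (x - y)
  have hxR : ‖x - y‖ ≤ 2 * R := by simpa [dist_eq_norm] using hx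
  have hnonneg : 0 ≤ w x - φ (‖x - y‖ ^ 2) := by
    by_contra hneg
    push Not at hneg
    have h1 : r < ‖x - y‖ := by
      by_contra h1
      push Not at h1
      have h2 := hball x h1
      have h3 : Real.exp (-α * ‖x - y‖ ^ 2) ≤ 1 := by
        rw [Real.exp_le_one_iff]
        nlinarith [mul_nonneg (zero_le_one.trans hα1) (sq_nonneg ‖x - y‖)]
      simp only [hφ] at hneg
      nlinarith
    have h2 : ‖x - y‖ < 2 * R := by
      refine lt_of_le_of_ne hxR fun h2 => ?_
      rw [h2] at hneg
      simp only [hφ, ← hb, sub_self, mul_zero, sub_zero] at hneg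
      linarith [hw0 x]
    have hloc : IsLocalMin (fun z => w z - φ (‖z - y‖ ^ 2)) x :=
      hmin.isLocalMin (Filter.mem_of_superset
        (Metric.isOpen_ball.mem_nhds (by simpa [dist_eq_norm] using h2))
        Metric.ball_subset_closedBall)
    have hle := lap_le_of_isLocalMin_sub hw.contDiffAt hcd.contDiffAt hloc
    rw [lap_radial y x (Eventually.of_forall hφd) (hφd2 _)] at hle
    have h3 := hwl x
    have hepos := Real.exp_pos (-α * ‖x - y‖ ^ 2)
    set ex := Real.exp (-α * ‖x - y‖ ^ 2) with hex
    have h4 : w x ≤ δ * ex := by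
      simp only [hφ, ← hex] at hneg
      nlinarith
    have h5 : K * w x ≤ K * (δ * ex) := by gcongr
    have h6 : δ * ex * (4 * ‖x - y‖ ^ 2 * α ^ 2 - 2 * n * α) ≤ δ * ex * K := by linarith
    have h7 := le_of_mul_le_mul_left h6 (by positivity)
    have h8 : r ^ 2 ≤ ‖x - y‖ ^ 2 := by nlinarith
    have h9 : K + 1 ≤ 4 * ‖x - y‖ ^ 2 * α - 2 * n := by nlinarith
    nlinarith
  intro z hz
  have hz2 : w x - φ (‖x - y‖ ^ 2) ≤ w z - φ (‖z - y‖ ^ 2) :=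
    hmin (by simp only [Metric.mem_closedBall, dist_eq_norm]; linarith)
  have hz3 : δ * (Real.exp (-α * R ^ 2) - b) ≤ φ (‖z - y‖ ^ 2) := by
    simp only [hφ]
    have h8 : ‖z - y‖ ^ 2 ≤ R ^ 2 := by nlinarith [norm_nonneg (z - y)]
    have : Real.exp (-α * R ^ 2) ≤ Real.exp (-α * ‖z - y‖ ^ 2) := by
      rw [Real.exp_le_exp]; nlinarith
    gcongr
  linarith

/-! ### Lipschitz bound for bounded functions with bounded Laplacian -/

/-- Brandt's maximum principle argument. With `e = e_i`, the function
`G(x, s) = u (x + s e) - u (x - s e)` satisfies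
`∑_{j ≠ i} ∂_jj G + ∂_ss G = Δu (x + s e) - Δu (x - s e) ≥ -2 C`, so it lies below the concave
profile `(C + 2) s - (C + 1) s²`, which dominates it at `s = 0` and at `s = 1`. The term `ε |x|²`
makes the maximum over the unbounded `x` attained. -/
lemma brandt {n : ℕ} {u : Euc n → ℝ} (hu : ContDiff ℝ 2 u) (h0 : ∀ x, 0 ≤ u x)
    (h1 : ∀ x, u x ≤ 1) {C : ℝ} (hC : ∀ x, |lap n u x| ≤ C) (i : Fin n) (x₀ : Euc n) (s₀ : ℝ)
    (hs₀ : s₀ ∈ Set.Icc (0:ℝ) 1) :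
    u (x₀ + s₀ • EuclideanSpace.single i 1) - u (x₀ - s₀ • EuclideanSpace.single i 1)
      ≤ (C + 2) * s₀ - (C + 1) * s₀ ^ 2 := by
  set e : Euc n := EuclideanSpace.single i 1 with he
  have huc := hu.continuous
  by_contra hcon
  push Not at hcon
  set B : ℝ := C + 2
  set A : ℝ := C + 1
  set η : ℝ := u (x₀ + s₀ • e) - u (x₀ - s₀ • e) - (B * s₀ - A * s₀ ^ 2) with hη
  have hηpos : 0 < η := by linarith
  obtain ⟨ε, hε, hε1, hε2⟩ : ∃ ε : ℝ, 0 < ε ∧ ε * ‖x₀‖ ^ 2 < η ∧ n * ε < 1 := by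
    refine ⟨min (η / (‖x₀‖ ^ 2 + 1)) (1 / (n + 1)), by positivity, ?_, ?_⟩
    · calc _ ≤ η / (‖x₀‖ ^ 2 + 1) * ‖x₀‖ ^ 2 := by gcongr; exact min_le_left _ _
        _ < η := by rw [div_mul_eq_mul_div, div_lt_iff₀ (by positivity)]; nlinarith
    · calc _ ≤ n * (1 / ((n:ℝ) + 1)) := by gcongr; exact min_le_right _ _
        _ < 1 := by rw [mul_one_div, div_lt_one (by positivity)]; linarith
  set Ψ : Euc n × ℝ → ℝ := fun p =>
    u (p.1 + p.2 • e) - u (p.1 - p.2 • e) - (B * p.2 - A * p.2 ^ 2) - ε * ‖p.1‖ ^ 2 with hΨ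
  have hΨc : Continuous Ψ := by simp only [hΨ]; fun_prop
  have hΨ0 : 0 < Ψ (x₀, s₀) := by simp only [hΨ]; linarith
  obtain ⟨R, hR0, hR, hRx⟩ : ∃ R : ℝ, 0 < R ∧ 1 < ε * R ^ 2 ∧ ‖x₀‖ ≤ R := by
    refine ⟨‖x₀‖ + 1 / ε + 1, by positivity, ?_, by linarith [show 0 < 1 / ε by positivity]⟩
    have h1 : 1 / ε + 1 ≤ ‖x₀‖ + 1 / ε + 1 := by linarith [norm_nonneg x₀]
    have h2 : 0 < 1 / ε := by positivity
    have h3 : ε * (1 / ε) = 1 := by field_simp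
    calc 1 = ε * (1 / ε) := h3.symm
      _ < ε * (1 / ε + 1) ^ 2 := by gcongr; nlinarith
      _ ≤ _ := by gcongr
  have hcomp : IsCompact ((Metric.closedBall (0 : Euc n) R) ×ˢ (Set.Icc (0:ℝ) 1)) :=
    (isCompact_closedBall _ _).prod isCompact_Icc
  obtain ⟨⟨x, s⟩, ⟨hx, hs⟩, hmax⟩ := hcomp.exists_isMaxOn
    ⟨(x₀, s₀), by simpa using hRx, hs₀⟩ hΨc.continuousOn
  have hm0 : 0 < Ψ (x, s) :=
    hΨ0.trans_le (hmax (show (x₀, s₀) ∈ _ from ⟨by simpa using hRx, hs₀⟩))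
  have hbd : ∀ y z, u y - u z ≤ 1 := fun y z => by linarith [h0 z, h1 y]
  have hC0 : 0 ≤ C := (abs_nonneg _).trans (hC x₀)
  have hglob : ∀ y : Euc n, ∀ τ ∈ Set.Icc (0:ℝ) 1, Ψ (y, τ) ≤ Ψ (x, s) := by
    intro y τ hτ
    by_cases hy : ‖y‖ ≤ R
    · exact hmax (show (y, τ) ∈ _ from ⟨by simpa using hy, hτ⟩)
    · push Not at hy
      refine le_trans ?_ hm0.le
      simp only [hΨ]
      have h2 : ε * R ^ 2 ≤ ε * ‖y‖ ^ 2 := by gcongr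
      have h3 : 0 ≤ B * τ - A * τ ^ 2 := by
        have : B * τ - A * τ ^ 2 = τ + A * τ * (1 - τ) := by simp only [A, B]; ring
        rw [this]
        have := hτ.1
        have : 0 ≤ 1 - τ := by linarith [hτ.2]
        positivity
      linarith [hbd (y + τ • e) (y - τ • e)]
  have hxx : 0 ≤ ε * ‖x‖ ^ 2 := by positivity
  have hs0 : 0 < s := by
    refine lt_of_le_of_ne hs.1 fun h => ?_
    simp only [hΨ, ← h] at hm0
    simp at hm0
    linarith
  have hs1 : s < 1 := by
    refine lt_of_le_of_ne hs.2 fun h => ?_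
    simp only [hΨ, h] at hm0
    have := hbd (x + (1:ℝ) • e) (x - (1:ℝ) • e)
    simp only [A, B] at hm0
    linarith
  -- second derivatives in the space directions
  have hspace : ∀ j : Fin n, D2 u (x + s • e) (EuclideanSpace.single j 1)
      - D2 u (x - s • e) (EuclideanSpace.single j 1) ≤ 2 * ε := by
    intro j
    have hc1 : ContDiff ℝ 2 (fun y : Euc n => ε * ‖y‖ ^ 2) :=
      contDiff_const.mul (contDiff_id.norm_sq ℝ)
    have hc2 : ContDiff ℝ 2 (fun y : Euc n => u (y + s • e)) :=
      hu.comp (contDiff_id.add contDiff_const)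
    have hc3 : ContDiff ℝ 2 (fun y : Euc n => u (y + -(s • e))) :=
      hu.comp (contDiff_id.add contDiff_const)
    have hmin : IsLocalMin
        (fun y => (ε * ‖y‖ ^ 2) - (u (y + s • e) - u (y + -(s • e)))) x := by
      refine Eventually.of_forall fun y => ?_
      have := hglob y s hs
      simp only [hΨ] at this
      simp only [← sub_eq_add_neg]
      linarith
    have hD := D2_nonneg_of_isLocalMin
      (hc1.contDiffAt.sub (hc2.contDiffAt.sub hc3.contDiffAt)) hmin (EuclideanSpace.single j 1)
    rw [D2_sub hc1.contDiffAt (hc2.contDiffAt.sub hc3.contDiffAt),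
      D2_sub hc2.contDiffAt hc3.contDiffAt, D2_mul_norm_sq, D2_comp_add, D2_comp_add,
      ← sub_eq_add_neg] at hD
    linarith
  -- second derivative in `s`
  have htime : D2 u (x + s • e) e - D2 u (x - s • e) e + 2 * A ≤ 0 := by
    set g₁ : ℝ → ℝ := fun τ => u ((x + s • e) + τ • e) with hg₁
    set g₂ : ℝ → ℝ := fun τ => u ((x - s • e) + τ • (-e)) with hg₂
    have hd := hu.differentiable (by simp)
    have hg₁d : Differentiable ℝ g₁ := by
      intro τ; simp only [hg₁]; fun_prop
    have hg₂d : Differentiable ℝ g₂ := by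
      intro τ; simp only [hg₂]; fun_prop
    have hp : ∀ τ, HasDerivAt (fun τ : ℝ => B * (s + τ) - A * (s + τ) ^ 2)
        (B - 2 * A * (s + τ)) τ := by
      intro τ
      have h1 : HasDerivAt (fun τ : ℝ => s + τ) 1 τ := (hasDerivAt_id τ).const_add s
      refine HasDerivAt.congr_deriv ((h1.const_mul B).sub ((h1.pow 2).const_mul A)) ?_
      simp; ring
    have hmin : IsLocalMin (fun τ => (B * (s + τ) - A * (s + τ) ^ 2) - (g₁ τ - g₂ τ)) 0 := by
      have hI : Set.Ioo (-s) (1 - s) ∈ nhds (0:ℝ) := Ioo_mem_nhds (by linarith) (by linarith)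
      filter_upwards [hI] with τ hτ
      have := hglob x (s + τ) ⟨by linarith [hτ.1], by linarith [hτ.2]⟩
      simp only [hΨ] at this
      simp only [hg₁, hg₂]
      have e1 : x + s • e + τ • e = x + (s + τ) • e := by module
      have e2 : x - s • e + τ • (-e) = x - (s + τ) • e := by module
      rw [e1, e2]
      simp only [zero_smul, add_zero]
      linarith
    have hder : deriv (fun τ => (B * (s + τ) - A * (s + τ) ^ 2) - (g₁ τ - g₂ τ))
        = fun τ => (B - 2 * A * (s + τ)) - (deriv g₁ τ - deriv g₂ τ) := by
      ext τ
      exact ((hp τ).sub ((hg₁d τ).hasDerivAt.sub (hg₂d τ).hasDerivAt)).deriv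
    have h2 := second_deriv_nonneg hmin (by
      have := hg₁d.continuous
      have := hg₂d.continuous
      fun_prop)
    have hq : HasDerivAt (fun τ : ℝ => B - 2 * A * (s + τ)) (-(2 * A)) 0 := by
      have h1 : HasDerivAt (fun τ : ℝ => s + τ) 1 0 := (hasDerivAt_id (0:ℝ)).const_add s
      refine HasDerivAt.congr_deriv ((h1.const_mul (2 * A)).const_sub B) ?_
      simp
    have hg₁' := hasDerivAt_deriv_line (hu.contDiffAt (x := x + s • e)) e
    have hg₂' := hasDerivAt_deriv_line (hu.contDiffAt (x := x - s • e)) (-e)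
    have h3 := (hq.sub (hg₁'.sub hg₂')).deriv
    rw [hder] at h2
    have h4 : 0 ≤ -(2 * A) - (D2 u (x + s • e) e - D2 u (x - s • e) (-e)) := by
      rw [← h3]; exact h2
    rw [D2_neg_dir] at h4
    linarith
  have hsum : lap n u (x + s • e) - lap n u (x - s • e) ≤ 2 * n * ε - 2 * A := by
    rw [lap_eq, lap_eq, ← Finset.sum_sub_distrib, ← Finset.add_sum_erase _ _ (Finset.mem_univ i)]
    have h3 : ∑ j ∈ Finset.univ.erase i, (D2 u (x + s • e) (EuclideanSpace.single j 1)
      - D2 u (x - s • e) (EuclideanSpace.single j 1)) ≤ ∑ j ∈ Finset.univ.erase i, 2 * ε :=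
      Finset.sum_le_sum fun j _ => hspace j
    have h4 : ∑ j ∈ Finset.univ.erase i, 2 * ε ≤ ∑ j : Fin n, 2 * ε :=
      Finset.sum_le_sum_of_subset_of_nonneg (Finset.erase_subset _ _)
        (fun _ _ _ => by positivity)
    have h5 : ∑ j : Fin n, 2 * ε = 2 * n * ε := by simp; ring
    rw [← he]
    linarith
  have h6 := abs_le.1 (hC (x + s • e))
  have h7 := abs_le.1 (hC (x - s • e))
  simp only [A] at hsum
  linarith [h6.1, h7.2]

lemma partial_le {n : ℕ} {u : Euc n → ℝ} (hu : ContDiff ℝ 2 u) (h0 : ∀ x, 0 ≤ u x)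
    (h1 : ∀ x, u x ≤ 1) {C : ℝ} (hC : ∀ x, |lap n u x| ≤ C) (i : Fin n) (x : Euc n) :
    fderiv ℝ u x (EuclideanSpace.single i 1) ≤ C + 2 := by
  have hC0 : 0 ≤ C := (abs_nonneg _).trans (hC x)
  have hb := brandt hu h0 h1 hC i x
  set e : Euc n := EuclideanSpace.single i 1 with he
  have hd := hu.differentiable (by simp)
  have hl : ∀ f : Euc n, HasDerivAt (fun s : ℝ => u (x + s • f)) (fderiv ℝ u x f) 0 := by
    intro f
    have h2 : HasDerivAt (fun s : ℝ => x + s • f) f 0 := by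
      simpa using ((hasDerivAt_id (0:ℝ)).smul_const f).const_add x
    have h3 : HasFDerivAt u (fderiv ℝ u x) (x + (0:ℝ) • f) := by simpa using (hd x).hasFDerivAt
    have h4 := h3.comp_hasDerivAt (0:ℝ) h2
    exact h4
  have hg : HasDerivAt (fun s : ℝ => (C + 2) * s - (u (x + s • e) - u (x + s • (-e))))
      (C + 2 - 2 * fderiv ℝ u x e) 0 := by
    refine HasDerivAt.congr_deriv
      (((hasDerivAt_id (0:ℝ)).const_mul (C + 2)).sub ((hl e).sub (hl (-e)))) ?_
    simp; ring
  have hnn : 0 ≤ C + 2 - 2 * fderiv ℝ u x e := by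
    have ht := hg.hasDerivWithinAt (s := Set.Ioi 0)
    rw [hasDerivWithinAt_iff_tendsto_slope' (by simp)] at ht
    refine ge_of_tendsto ht ?_
    have : Set.Ioo (0:ℝ) 1 ∈ nhdsWithin (0:ℝ) (Set.Ioi 0) := Ioo_mem_nhdsGT one_pos
    filter_upwards [this] with s hs
    have h3 := hb s ⟨hs.1.le, hs.2.le⟩
    have h4 : x - s • e = x + s • (-e) := by module
    rw [h4] at h3
    rw [slope_def_field]
    apply div_nonneg _ (by simpa using hs.1.le)
    simp only [mul_zero, zero_smul, sub_self, sub_zero]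
    nlinarith [sq_nonneg s]
  linarith

lemma abs_sub_le_of_lap {n : ℕ} {u : Euc n → ℝ} (hu : ContDiff ℝ 2 u) (h0 : ∀ x, 0 ≤ u x)
    (h1 : ∀ x, u x ≤ 1) {C : ℝ} (hC : ∀ x, |lap n u x| ≤ C) (x y : Euc n) :
    |u x - u y| ≤ n * (C + 2) * ‖x - y‖ := by
  have hd := hu.differentiable (by simp)
  have hpart : ∀ z (i : Fin n), |fderiv ℝ u z (EuclideanSpace.single i 1)| ≤ C + 2 := by
    intro z i
    have hu' : ContDiff ℝ 2 (fun y => 1 - u y) := contDiff_const.sub hu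
    have hlap : ∀ y, lap n (fun y => 1 - u y) y = - lap n u y := by
      intro y
      rw [lap_sub contDiffAt_const hu.contDiffAt]
      simp [lap]
    have h2 := partial_le hu' (fun y => by linarith [h1 y]) (fun y => by linarith [h0 y])
      (C := C) (fun y => by rw [hlap, abs_neg]; exact hC y) i z
    rw [fderiv_const_sub] at h2
    have h3 := partial_le hu h0 h1 hC i z
    rw [abs_le]
    simp only [neg_apply] at h2
    exact ⟨by linarith, h3⟩
  have hC0 : 0 ≤ C := (abs_nonneg _).trans (hC x)
  have hnorm : ∀ z, ‖fderiv ℝ u z‖ ≤ n * (C + 2) := by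
    intro z
    refine ContinuousLinearMap.opNorm_le_bound _ (by positivity) fun h => ?_
    have hh : h = ∑ i, h i • (EuclideanSpace.single i (1:ℝ) : Euc n) := by
      ext j; simp [Finset.sum_apply, Pi.single_apply]
    calc ‖fderiv ℝ u z h‖ = ‖∑ i, h i * fderiv ℝ u z (EuclideanSpace.single i 1)‖ := by
          conv_lhs => rw [hh]
          simp
      _ ≤ ∑ i, ‖h i * fderiv ℝ u z (EuclideanSpace.single i 1)‖ := norm_sum_le _ _
      _ ≤ ∑ i : Fin n, (C + 2) * ‖h‖ := by
          refine Finset.sum_le_sum fun i _ => ?_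
          rw [norm_mul, mul_comm]
          gcongr
          · exact hpart z i
          · exact PiLp.norm_apply_le h i
      _ = n * (C + 2) * ‖h‖ := by simp; ring
  have := Convex.norm_image_sub_le_of_norm_fderiv_le (𝕜 := ℝ) (f := u) (s := Set.univ)
    (fun z _ => hd z) (fun z _ => hnorm z) convex_univ (Set.mem_univ y) (Set.mem_univ x)
  simpa using this

/-! ### Translates: maximum principle and strict monotonicity -/

lemma lap_neg {n : ℕ} (f : Euc n → ℝ) (x : Euc n) : lap n (fun y => -f y) x = -lap n f x := by
  simp [lap, fderiv_fun_neg]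

lemma lap_translate_sub {n : ℕ} {g : Euc n → ℝ} (hg : ContDiff ℝ 2 g) (a x : Euc n) :
    lap n (fun y => g (y + a) - g y) x = lap n g (x + a) - lap n g x := by
  have h : ContDiff ℝ 2 (fun y : Euc n => g (y + a)) := hg.comp (contDiff_id.add contDiff_const)
  rw [lap_sub h.contDiffAt hg.contDiffAt, lap_comp_add]

lemma contDiff_translate_sub {n : ℕ} {g : Euc n → ℝ} (hg : ContDiff ℝ 2 g) (a : Euc n) :
    ContDiff ℝ 2 (fun y => g (y + a) - g y) :=
  (hg.comp (contDiff_id.add contDiff_const)).sub hg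

/-- Maximum principle on the whole space for the pair `(w, z)`: it suffices to control the Laplacian
of whichever function realizes a negative value of `min w z`. The minimum of `min w z + ε |x|²` is
attained because `w` and `z` are bounded below. -/
lemma cooperative_max_principle {n : ℕ} {w z : Euc n → ℝ} (hw : ContDiff ℝ 2 w)
    (hz : ContDiff ℝ 2 z) (hw1 : ∀ x, -1 ≤ w x) (hz1 : ∀ x, -1 ≤ z x) {κ : ℝ} (hκ : 0 < κ)
    (hwl : ∀ x, w x < 0 → w x ≤ z x → lap n w x ≤ κ * w x)
    (hzl : ∀ x, z x < 0 → z x ≤ w x → lap n z x ≤ κ * z x) (x : Euc n) : 0 ≤ w x ∧ 0 ≤ z x := by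
  rw [← le_min_iff]
  by_contra hcon
  push Not at hcon
  set η : ℝ := -(min (w x) (z x)) with hη
  have hηpos : 0 < η := by linarith
  obtain ⟨ε, hε, hε1, hε2⟩ : ∃ ε : ℝ, 0 < ε ∧ ε * ‖x‖ ^ 2 ≤ η / 2 ∧ 2 * n * ε < κ * (η / 2) := by
    refine ⟨min (η / 2 / (‖x‖ ^ 2 + 1)) (κ * (η / 2) / (2 * n + 1)), by positivity, ?_, ?_⟩
    · calc _ ≤ η / 2 / (‖x‖ ^ 2 + 1) * ‖x‖ ^ 2 := by gcongr; exact min_le_left _ _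
        _ ≤ η / 2 := by rw [div_mul_eq_mul_div, div_le_iff₀ (by positivity)]; nlinarith
    · calc _ ≤ 2 * n * (κ * (η / 2) / (2 * (n:ℝ) + 1)) := by gcongr; exact min_le_right _ _
        _ < κ * (η / 2) := by
          have : 0 < κ * (η / 2) := by positivity
          rw [mul_div_assoc', div_lt_iff₀ (by positivity)]; nlinarith
  have hwc := hw.continuous
  have hzc := hz.continuous
  have hcont : Continuous fun y => min (w y) (z y) + ε * ‖y‖ ^ 2 := by fun_prop
  have hlim : Tendsto (fun y => min (w y) (z y) + ε * ‖y‖ ^ 2) (cocompact (Euc n)) atTop := by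
    have h1 : Tendsto (fun y : Euc n => -1 + ε * ‖y‖ ^ 2) (cocompact (Euc n)) atTop :=
      tendsto_atTop_add_const_left _ _ (((tendsto_pow_atTop two_ne_zero).comp
        (tendsto_norm_cocompact_atTop (E := Euc n))).const_mul_atTop hε)
    refine tendsto_atTop_mono (fun y => ?_) h1
    have := le_min (hw1 y) (hz1 y)
    linarith
  obtain ⟨p, hp⟩ := hcont.exists_forall_le hlim
  have hpx := hp x
  have hpneg : min (w p) (z p) ≤ -(η / 2) := by
    have : 0 ≤ ε * ‖p‖ ^ 2 := by positivity
    linarith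
  have main : ∀ f : Euc n → ℝ, ContDiff ℝ 2 f → (∀ y, min (w y) (z y) ≤ f y) →
      f p = min (w p) (z p) → ¬ lap n f p ≤ κ * f p := by
    intro f hf hfm hfp hle
    have hc1 : ContDiff ℝ 2 (fun y : Euc n => ε * ‖y‖ ^ 2) :=
      contDiff_const.mul (contDiff_id.norm_sq ℝ)
    have hmin : IsLocalMin (fun y => f y + ε * ‖y‖ ^ 2) p := by
      refine Eventually.of_forall fun y => ?_
      have := hp y
      have := hfm y
      simp only [hfp]
      linarith
    have h0 := lap_nonneg_of_isLocalMin (hf.contDiffAt.add hc1.contDiffAt) hmin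
    rw [lap_add hf.contDiffAt hc1.contDiffAt, lap_mul_norm_sq] at h0
    have h1 : κ * f p ≤ κ * (-(η / 2)) := by rw [hfp]; gcongr
    linarith
  rcases le_total (w p) (z p) with h | h
  · have e := min_eq_left h
    exact main w hw (fun y => min_le_left _ _) e.symm (hwl p (by linarith) h)
  · have e := min_eq_right h
    exact main z hz (fun y => min_le_right _ _) e.symm (hzl p (by linarith) h)

/-- If `g` increases under translation by `a`, and by at least `1/2` between `x - J a` and `x + J a`
for `x ∈ S`, then the increment over a single `a` is bounded below uniformly on `S`. -/
lemma exists_strip_bound {n : ℕ} {g : Euc n → ℝ} (hg : ContDiff ℝ 2 g) {L K : ℝ} (hL : 0 < L)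
    (hgL : ∀ x y, |g x - g y| ≤ L * ‖x - y‖) (hK : 0 ≤ K) (a : Euc n)
    (hpos : ∀ x, g x ≤ g (x + a))
    (hlap : ∀ x, lap n g (x + a) - lap n g x ≤ K * (g (x + a) - g x)) (J : ℕ) (S : Set (Euc n))
    (hS : ∀ x ∈ S, 1 / 2 ≤ g (x + (J : ℝ) • a) - g (x - (J : ℝ) • a)) :
    ∃ c : ℝ, 0 < c ∧ ∀ x ∈ S, c ≤ g (x + a) - g x := by
  set δ : ℝ := 1 / (4 * (J + 1)) with hδ
  have hδpos : 0 < δ := by positivity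
  set r : ℝ := δ / (4 * L) with hr
  have hrpos : 0 < r := by positivity
  obtain ⟨c, hc, hbound⟩ := exists_lower_bound n (K := K) (r := r) (R := J * ‖a‖ + r + 1) hK hrpos
    (by have : 0 ≤ J * ‖a‖ := by positivity
        linarith)
  refine ⟨c * (δ / 2), by positivity, fun x hx => ?_⟩
  -- some step of the telescoping sum along `a` is at least `δ`
  obtain ⟨k, hk, hkδ⟩ : ∃ k ∈ Finset.range (2 * J),
      δ ≤ g (x + ((k : ℝ) - J) • a + a) - g (x + ((k : ℝ) - J) • a) := by
    by_contra hcon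
    push Not at hcon
    have h1 := Finset.sum_le_sum fun k hk => (hcon k hk).le
    have h2 : ∑ k ∈ Finset.range (2 * J),
        (g (x + ((k : ℝ) - J) • a + a) - g (x + ((k : ℝ) - J) • a))
        = g (x + (J : ℝ) • a) - g (x - (J : ℝ) • a) := by
      have h3 := Finset.sum_range_sub (fun k : ℕ => g (x + ((k : ℝ) - J) • a)) (2 * J)
      have e1 : x + (((2 * J : ℕ) : ℝ) - J) • a = x + (J : ℝ) • a := by
        push_cast; congr 2; ring
      have e2 : x + (((0 : ℕ) : ℝ) - J) • a = x - (J : ℝ) • a := by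
        push_cast; module
      rw [e1, e2] at h3
      rw [← h3]
      refine Finset.sum_congr rfl fun k _ => ?_
      have e3 : x + ((k : ℝ) - J) • a + a = x + (((k + 1 : ℕ) : ℝ) - J) • a := by
        push_cast; module
      rw [e3]
    rw [h2] at h1
    have h4 := hS x hx
    simp only [Finset.sum_const, Finset.card_range, nsmul_eq_mul] at h1
    have h5 : ((2 * J : ℕ) : ℝ) * δ < 1 / 2 := by
      rw [hδ]; push_cast
      rw [mul_one_div, div_lt_div_iff₀ (by positivity) (by positivity)]
      linarith
    linarith
  set y := x + ((k : ℝ) - J) • a with hy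
  have := hbound (fun x => g (x + a) - g x) (contDiff_translate_sub hg a)
    (fun x => by linarith [hpos x]) (fun x => by rw [lap_translate_sub hg]; exact hlap x) y (δ / 2)
    (by positivity) (fun q hq => ?_) x ?_
  · exact this
  · have h1 := (abs_le.1 (hgL (q + a) (y + a))).1
    have h2 := (abs_le.1 (hgL q y)).2
    rw [add_sub_add_right_eq_sub] at h1
    have h3 : L * ‖q - y‖ ≤ L * r := by gcongr
    have h4 : L * r = δ / 4 := by rw [hr]; field_simp
    linarith
  · have e : x - y = -(((k : ℝ) - J) • a) := by rw [hy]; module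
    rw [e, norm_neg, norm_smul, Real.norm_eq_abs]
    have hk' : (k : ℝ) < 2 * J := by
      have := Finset.mem_range.1 hk
      exact_mod_cast this
    have h1 : |(k : ℝ) - J| ≤ J := by
      rw [abs_le]; constructor <;> linarith [Nat.cast_nonneg (α := ℝ) k]
    have h2 : |(k : ℝ) - J| * ‖a‖ ≤ J * ‖a‖ := by gcongr
    linarith

/-- A function nondecreasing but not constant along `ν`, whose increments satisfy `Δw ≤ K w`, has
positive derivative along `ν`. Working with increments avoids third derivatives of `g`. -/
lemma fderiv_pos_of_monotone {n : ℕ} {g : Euc n → ℝ} (hg : ContDiff ℝ 2 g) {K : ℝ} (hK : 0 ≤ K)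
    {ν : Euc n} (hν : ‖ν‖ = 1) (hmono : ∀ t : ℝ, 0 ≤ t → ∀ x, g x ≤ g (x + t • ν))
    (hlap : ∀ t : ℝ, 0 ≤ t → ∀ x,
      lap n g (x + t • ν) - lap n g x ≤ K * (g (x + t • ν) - g x))
    (hex : ∃ x, ∃ s : ℝ, 0 < s ∧ g x < g (x + s • ν)) (x : Euc n) : 0 < fderiv ℝ g x ν := by
  have hd := hg.differentiable (by simp)
  have hl : ∀ (p : Euc n) (s : ℝ),
      HasDerivAt (fun s : ℝ => g (p + s • ν)) (fderiv ℝ g (p + s • ν) ν) s := by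
    intro p s
    have h2 : HasDerivAt (fun s : ℝ => p + s • ν) ν s := by
      simpa using ((hasDerivAt_id s).smul_const ν).const_add p
    have h4 := (hd (p + s • ν)).hasFDerivAt.comp_hasDerivAt s h2
    exact h4
  have hmvt : ∀ (p : Euc n) (t : ℝ), 0 < t → ∃ s ∈ Set.Ioo 0 t,
      g (p + t • ν) - g p = fderiv ℝ g (p + s • ν) ν * t := by
    intro p t ht
    obtain ⟨s, hs, hs2⟩ := exists_hasDerivAt_eq_slope (fun s : ℝ => g (p + s • ν))
      (fun s => fderiv ℝ g (p + s • ν) ν) ht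
      (fun s _ => (hl p s).continuousAt.continuousWithinAt) (fun s _ => hl p s)
    refine ⟨s, hs, ?_⟩
    simp only [zero_smul, add_zero, sub_zero] at hs2
    rw [hs2]; field_simp
  obtain ⟨y, hy⟩ : ∃ y, 0 < fderiv ℝ g y ν := by
    obtain ⟨p, t, ht, hlt⟩ := hex
    obtain ⟨s, -, hs⟩ := hmvt p t ht
    refine ⟨p + s • ν, ?_⟩
    by_contra hneg
    push Not at hneg
    nlinarith
  set δ := fderiv ℝ g y ν / 2 with hδ
  have hδpos : 0 < δ := by positivity
  have hcont : Continuous fun q => fderiv ℝ g q ν :=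
    (hg.continuous_fderiv (by simp)).clm_apply continuous_const
  obtain ⟨r, hr, hball⟩ : ∃ r > 0, Metric.ball y r ⊆ {q | δ < fderiv ℝ g q ν} :=
    Metric.isOpen_iff.1 (isOpen_lt continuous_const hcont) y (by simp [hδ, hy])
  obtain ⟨c, hc, hbound⟩ := exists_lower_bound n (K := K) (r := r / 2) (R := ‖x - y‖ + r) hK
    (by positivity) (by linarith [norm_nonneg (x - y)])
  have hlow : ∀ t ∈ Set.Ioo (0:ℝ) (r / 2), c * (δ * t) ≤ g (x + t • ν) - g x := by
    intro t ht
    refine hbound (fun x => g (x + t • ν) - g x) (contDiff_translate_sub hg _)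
      (fun q => by linarith [hmono t ht.1.le q])
      (fun q => by rw [lap_translate_sub hg]; exact hlap t ht.1.le q) y (δ * t)
      (mul_pos hδpos ht.1) (fun q hq => ?_) x (by linarith)
    obtain ⟨s, hs, hs2⟩ := hmvt q t ht.1
    have hmem : q + s • ν ∈ Metric.ball y r := by
      rw [Metric.mem_ball, dist_eq_norm]
      have e : q + s • ν - y = (q - y) + s • ν := by module
      have h1 := norm_add_le (q - y) (s • ν)
      rw [norm_smul, hν, Real.norm_eq_abs, abs_of_pos hs.1] at h1
      rw [e]
      linarith [hs.2, ht.2]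
    have h3 : δ < fderiv ℝ g (q + s • ν) ν := hball hmem
    rw [hs2]
    have := ht.1
    gcongr
  have hx := hl x 0
  simp only [zero_smul, add_zero] at hx
  have hfin : c * δ ≤ fderiv ℝ g x ν := by
    have ht := hx.hasDerivWithinAt (s := Set.Ioi 0)
    rw [hasDerivWithinAt_iff_tendsto_slope' (by simp)] at ht
    refine ge_of_tendsto ht ?_
    have : Set.Ioo (0:ℝ) (r / 2) ∈ nhdsWithin (0:ℝ) (Set.Ioi 0) := Ioo_mem_nhdsGT (by positivity)
    filter_upwards [this] with s hs
    have h3 := hlow s hs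
    rw [slope_def_field, zero_smul, add_zero, sub_zero, le_div_iff₀ hs.1]
    linarith
  exact lt_of_lt_of_le (by positivity) hfin

/-! ### Algebra of the reaction term -/

/-- With `(a, b) = (u, v)(x)` and `(c, d) = (u, v)(x + tν)`: if `w = c - a` is negative and does not
exceed `z = b - d`, and if one of the two points is close to the corresponding limit state, then
`-Δw ≥ κ |w|`. The system is invariant under `(a, b, c, d) ↦ (d, c, b, a)`, which exchanges `w` and
`z` and the two alternatives, so this also covers `z`. -/
lemma reaction_coercive {Λ : ℝ} (hΛ : 1 < Λ) : ∃ ε > 0, ∃ κ > 0, ∀ a b c d : ℝ,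
    0 ≤ a → 0 ≤ b → 0 ≤ c → 0 ≤ d → a ^ 2 + b ^ 2 ≤ 1 → c ^ 2 + d ^ 2 ≤ 1 →
    (a < ε ∧ 1 - ε < b ∨ 1 - ε < c ∧ d < ε) → c < a → c - a ≤ b - d →
    κ * (a - c) ≤ (c - c ^ 3 - Λ * c * d ^ 2) - (a - a ^ 3 - Λ * a * b ^ 2) := by
  -- `σ` bounds `b` in the second case, where `b² ≤ 1 - a² ≤ 2 ε`
  set σ : ℝ := 1 / (4 * Λ) with hσ
  have hΛ0 : 0 < Λ := by linarith
  have hσpos : 0 < σ := by positivity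
  have hΛσ : Λ * σ = 1 / 4 := by rw [hσ]; field_simp
  set ε : ℝ := min ((Λ - 1) / (8 * Λ)) (min (σ ^ 2 / 2) (min σ (1 / 16))) with hε
  have hεpos : 0 < ε := by
    have : 0 < Λ - 1 := by linarith
    positivity
  have hε1 : ε ≤ (Λ - 1) / (8 * Λ) := min_le_left _ _
  have hε2 : ε ≤ σ ^ 2 / 2 := (min_le_right _ _).trans (min_le_left _ _)
  have hε3 : ε ≤ σ := (min_le_right _ _).trans ((min_le_right _ _).trans (min_le_left _ _))
  have hε4 : ε ≤ 1 / 16 := (min_le_right _ _).trans ((min_le_right _ _).trans (min_le_right _ _))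
  have hε5 : Λ * ε ≤ (Λ - 1) / 8 := by
    rw [le_div_iff₀ (by positivity)] at hε1
    linarith
  refine ⟨ε, hεpos, min ((Λ - 1) / 2) 1, lt_min (by linarith) one_pos, ?_⟩
  intro a b c d ha hb hc hd hab hcd hcase hca hm
  have hb1 : b ≤ 1 := by nlinarith
  have hd1 : d ≤ 1 := by nlinarith
  have ha1 : a ≤ 1 := by nlinarith
  -- the increment is bounded below by `(a - c)` times the bracket `Q`
  set Q : ℝ := -1 + (a ^ 2 + a * c + c ^ 2) + Λ * b ^ 2 - Λ * (c * (b + d)) with hQ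
  have hQle : (a - c) * Q ≤ (c - c ^ 3 - Λ * c * d ^ 2) - (a - a ^ 3 - Λ * a * b ^ 2) := by
    have h1 : 0 ≤ Λ * (c * (b + d)) * ((b - d) - (c - a)) := by
      have : 0 ≤ (b - d) - (c - a) := by linarith
      positivity
    rw [hQ]
    linarith
  have hsq : ∀ p : ℝ, 1 - ε < p → 1 - 2 * ε ≤ p ^ 2 := by
    intro p hp
    nlinarith [sq_nonneg (p - 1)]
  have hκ : min ((Λ - 1) / 2) 1 ≤ Q := by
    rcases hcase with ⟨h1, h2⟩ | ⟨h1, h2⟩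
    · refine (min_le_left _ _).trans ?_
      have h3 : 1 - 2 * ε ≤ b ^ 2 := hsq b h2
      have h4 : c * (b + d) ≤ ε * 2 :=
        mul_le_mul (by linarith) (by linarith) (by linarith) hεpos.le
      have h5 : Λ * (1 - 2 * ε) ≤ Λ * b ^ 2 := by gcongr
      have h6 : Λ * (c * (b + d)) ≤ Λ * (ε * 2) := by gcongr
      have h7 : 0 ≤ a ^ 2 + a * c + c ^ 2 := by positivity
      rw [hQ]
      linarith
    · refine (min_le_right _ _).trans ?_
      have h3 : b ≤ σ := by
        have h4 := hsq a (by linarith)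
        exact (pow_le_pow_iff_left₀ hb hσpos.le two_ne_zero).1 (by linarith)
      have h4 : 1 - 2 * ε ≤ c ^ 2 := hsq c h1
      have h5 : c ^ 2 ≤ a * c := by rw [pow_two]; gcongr
      have h6 : a * c ≤ a ^ 2 := by rw [pow_two]; gcongr
      have h7 : c * (b + d) ≤ 1 * (σ + σ) :=
        mul_le_mul (by linarith) (by linarith) (by linarith) one_pos.le
      have h8 : Λ * (c * (b + d)) ≤ Λ * (1 * (σ + σ)) := by gcongr
      have h9 : 0 ≤ Λ * b ^ 2 := by positivity
      rw [hQ]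
      linarith
  have : 0 < a - c := by linarith
  calc _ ≤ Q * (a - c) := by gcongr
    _ = (a - c) * Q := mul_comm _ _
    _ ≤ _ := hQle

/-- The counterpart for ordered states, `c ≥ a` and `d ≤ b`: here `-Δw ≥ -(Λ + 2) w`, because the
coupling term has the favourable sign. -/
lemma reaction_lower {Λ a b c d : ℝ} (hΛ : 1 < Λ) (ha : 0 ≤ a) (hd : 0 ≤ d)
    (hc1 : c ≤ 1) (hb1 : b ≤ 1) (hac : a ≤ c) (hdb : d ≤ b) :
    -((Λ + 2) * (c - a)) ≤ (c - c ^ 3 - Λ * c * d ^ 2) - (a - a ^ 3 - Λ * a * b ^ 2) := by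
  have h1 : 0 ≤ Λ * (a * ((b - d) * (b + d))) := by
    have : 0 ≤ b - d := by linarith
    have : 0 ≤ b + d := by linarith
    positivity
  have h2 : d ^ 2 ≤ 1 := by nlinarith
  have h3 : c ^ 2 + a * c + a ^ 2 ≤ 3 := by nlinarith
  have h4 : 0 ≤ (c - a) * (3 - (c ^ 2 + a * c + a ^ 2)) :=
    mul_nonneg (by linarith) (by linarith)
  have h5 : 0 ≤ Λ * ((c - a) * (1 - d ^ 2)) :=
    mul_nonneg (by linarith) (mul_nonneg (by linarith) (by linarith))
  linarith

/-! ### Monotonicity of the solution -/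

lemma sq_add_sq_le_one {n : ℕ} {Λ : ℝ} (hΛ : 1 < Λ) {u v : Euc n → ℝ}
    (hsol : IsSolution n Λ u v) (x : Euc n) : u x ^ 2 + v x ^ 2 ≤ 1 := by
  obtain ⟨hu2, hv2, eu, ev⟩ := hsol
  refine le_one_of_lap_ge (s := fun x => u x ^ 2 + v x ^ 2) ((hu2.pow 2).add (hv2.pow 2)) ?_ x
  intro x
  rw [lap_add (hu2.pow 2).contDiffAt (hv2.pow 2).contDiffAt]
  have h1 := two_mul_le_lap_sq hu2 x
  have h2 := two_mul_le_lap_sq hv2 x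
  have h3 : lap n u x = -(u x - u x ^ 3 - Λ * u x * v x ^ 2) := by linarith [eu x]
  have h4 : lap n v x = -(v x - v x ^ 3 - Λ * u x ^ 2 * v x) := by linarith [ev x]
  rw [h3] at h1
  rw [h4] at h2
  have h5 : 0 ≤ (Λ - 1) * (u x ^ 2 * v x ^ 2) := mul_nonneg (by linarith) (by positivity)
  refine le_trans ?_ (add_le_add h1 h2)
  linarith

lemma abs_reaction_le {Λ a b : ℝ} (hΛ : 1 < Λ) (ha : 0 ≤ a) (hb : 0 ≤ b) (ha1 : a ≤ 1)
    (hb1 : b ≤ 1) : |a - a ^ 3 - Λ * a * b ^ 2| ≤ 1 + Λ := by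
  have h1 : a ^ 3 ≤ 1 := pow_le_one₀ ha ha1
  have h2 : 0 ≤ a ^ 3 := by positivity
  have h3 : a * b ^ 2 ≤ 1 := mul_le_one₀ ha1 (by positivity) (pow_le_one₀ hb hb1)
  have h4 : 0 ≤ a * b ^ 2 := by positivity
  have h5 : Λ * (a * b ^ 2) ≤ Λ * 1 := by gcongr
  have h6 : 0 ≤ Λ * (a * b ^ 2) := by positivity
  rw [abs_le]
  constructor <;> linarith

/-- Proposition 4.1: monotonicity in all directions of the upper
hemisphere `{ν ∈ 𝕊^{N-1} : ν · e_N > 0}`. -/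
theorem stmt_16 (N : ℕ) (Λ : ℝ) (hΛ : 1 < Λ)
    (u v : EuclideanSpace ℝ (Fin (N + 1)) → ℝ)
    (hsol : IsSolution (N + 1) Λ u v)
    (hu : ∀ x, 0 ≤ u x) (hv : ∀ x, 0 ≤ v x)
    (hinf : Hinf N u v) :
    ∀ ν : EuclideanSpace ℝ (Fin (N + 1)), ‖ν‖ = 1 → 0 < ν (Fin.last N) →
      ∀ x, 0 < fderiv ℝ u x ν ∧ fderiv ℝ v x ν < 0 := by
  intro ν hν hνN
  have hsq := sq_add_sq_le_one hΛ hsol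
  obtain ⟨hu2, hv2, eu, ev⟩ := hsol
  have hu1 : ∀ x, u x ≤ 1 := fun x => by nlinarith [hsq x, hu x]
  have hv1 : ∀ x, v x ≤ 1 := fun x => by nlinarith [hsq x, hv x]
  have lu : ∀ x, lap (N + 1) u x = -(u x - u x ^ 3 - Λ * u x * v x ^ 2) := fun x => by
    linarith [eu x]
  have lv : ∀ x, lap (N + 1) v x = -(v x - v x ^ 3 - Λ * v x * u x ^ 2) := fun x => by
    linarith [ev x]
  set L : ℝ := ((N + 1 : ℕ) : ℝ) * (1 + Λ + 2) with hL
  have hLpos : 0 < L := by positivity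
  have huL : ∀ x y, |u x - u y| ≤ L * ‖x - y‖ := abs_sub_le_of_lap hu2 hu hu1 fun x => by
    rw [lu, abs_neg]; exact abs_reaction_le hΛ (hu x) (hv x) (hu1 x) (hv1 x)
  have hvL : ∀ x y, |v x - v y| ≤ L * ‖x - y‖ := abs_sub_le_of_lap hv2 hv hv1 fun x => by
    rw [lv, abs_neg]; exact abs_reaction_le hΛ (hv x) (hu x) (hv1 x) (hu1 x)
  have hco : ∀ (x : Euc (N + 1)) (t : ℝ),
      (x + t • ν) (Fin.last N) = x (Fin.last N) + t * ν (Fin.last N) := by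
    intro x t; simp
  have hv2' : ContDiff ℝ 2 (fun y => -v y) := hv2.neg
  have hK : 0 ≤ Λ + 2 := by linarith
  obtain ⟨ε, hε, κ, hκ, hcoer⟩ := reaction_coercive hΛ
  obtain ⟨⟨M₁, hM₁⟩, ⟨M₂, hM₂⟩⟩ := And.intro (hinf.1 ε hε) (hinf.2 ε hε)
  obtain ⟨⟨m₁, hm₁⟩, ⟨m₂, hm₂⟩⟩ :=
    And.intro (hinf.1 (1 / 4) (by norm_num)) (hinf.2 (1 / 4) (by norm_num))
  set M : ℝ := max 0 (max M₁ (-M₂)) with hM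
  have hM0 : 0 ≤ M := le_max_left _ _
  have hMM₁ : M₁ ≤ M := (le_max_left _ _).trans (le_max_right _ _)
  have hMM₂ : -M₂ ≤ M := (le_max_right _ _).trans (le_max_right _ _)
  set P : ℝ → Prop := fun t => ∀ x, u x ≤ u (x + t • ν) ∧ v (x + t • ν) ≤ v x with hP
  -- Off the strip one of the two points `x`, `x + tν` is close to its limit state, so the order on
  -- the strip propagates to the whole space. For `t ν_N ≥ 2 M` the hypothesis is vacuous.
  have hA : ∀ t : ℝ, (∀ x : Euc (N + 1), -M < x (Fin.last N) →
      x (Fin.last N) + t * ν (Fin.last N) < M →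
      u x ≤ u (x + t • ν) ∧ v (x + t • ν) ≤ v x) → P t := by
    intro t hstrip x
    have hgood : ∀ y : Euc (N + 1), (u (y + t • ν) < u y ∨ v y < v (y + t • ν)) →
        (u y < ε ∧ 1 - ε < v y ∨ 1 - ε < u (y + t • ν) ∧ v (y + t • ν) < ε) := by
      intro y hy
      by_cases h1 : -M < y (Fin.last N)
      · by_cases h2 : y (Fin.last N) + t * ν (Fin.last N) < M
        · have := hstrip y h1 h2
          rcases hy with hy | hy <;> linarith
        · right
          have h3 := hM₁ (y + t • ν) (by rw [hco]; linarith)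
          exact ⟨by linarith [(abs_lt.1 h3.1).1], (abs_lt.1 h3.2).2⟩
      · left
        have h3 := hM₂ y (by linarith)
        exact ⟨(abs_lt.1 h3.1).2, by linarith [(abs_lt.1 h3.2).1]⟩
    have h := cooperative_max_principle (w := fun y => u (y + t • ν) - u y)
      (z := fun y => -v (y + t • ν) - -v y) (contDiff_translate_sub hu2 _)
      (contDiff_translate_sub hv2' _) (fun y => by linarith [hu (y + t • ν), hu1 y])
      (fun y => by linarith [hv y, hv1 (y + t • ν)]) hκ ?_ ?_ x
    · exact ⟨by linarith [h.1], by linarith [h.2]⟩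
    · intro y h1 h2
      rw [lap_translate_sub hu2, lu, lu]
      have := hcoer (u y) (v y) (u (y + t • ν)) (v (y + t • ν)) (hu _) (hv _) (hu _) (hv _)
        (hsq _) (hsq _) (hgood y (Or.inl (by linarith))) (by linarith) (by linarith)
      linarith
    · intro y h1 h2
      rw [lap_translate_sub hv2', lap_neg, lap_neg, lv, lv]
      have := hcoer (v (y + t • ν)) (u (y + t • ν)) (v y) (u y) (hv _) (hu _) (hv _) (hu _)
        (by linarith [hsq (y + t • ν)]) (by linarith [hsq y])
        ((hgood y (Or.inr (by linarith))).symm.imp And.symm And.symm) (by linarith) (by linarith)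
      linarith
  have hlapu : ∀ t, P t → ∀ x, lap (N + 1) u (x + t • ν) - lap (N + 1) u x
      ≤ (Λ + 2) * (u (x + t • ν) - u x) := by
    intro t ht x
    have := reaction_lower hΛ (hu x) (hv (x + t • ν)) (hu1 _) (hv1 x) (ht x).1 (ht x).2
    rw [lu, lu]
    linarith
  have hlapv : ∀ t, P t → ∀ x,
      lap (N + 1) (fun y => -v y) (x + t • ν) - lap (N + 1) (fun y => -v y) x
      ≤ (Λ + 2) * (-v (x + t • ν) - -v x) := by
    intro t ht x
    have := reaction_lower hΛ (hv (x + t • ν)) (hu x) (hv1 x) (hu1 _) (ht x).2 (ht x).1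
    rw [lap_neg, lap_neg, lv, lv]
    linarith
  -- transition between the two limits along `ν`
  have htrans : ∀ (x : Euc (N + 1)) (T : ℝ), |x (Fin.last N)| ≤ M →
      max m₁ (-m₂) + M ≤ T * ν (Fin.last N) →
      1 / 2 ≤ u (x + T • ν) - u (x - T • ν) ∧ 1 / 2 ≤ -v (x + T • ν) - -v (x - T • ν) := by
    intro x T hx hT
    have hx' := abs_le.1 hx
    have h1 := hm₁ (x + T • ν) (by rw [hco]; linarith [le_max_left m₁ (-m₂)])
    have h2 := hm₂ (x - T • ν) (by
      have e : x - T • ν = x + (-T) • ν := by module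
      rw [e, hco]; linarith [le_max_right m₁ (-m₂)])
    have h3 := abs_lt.1 h1.1
    have h4 := abs_lt.1 h1.2
    have h5 := abs_lt.1 h2.1
    have h6 := abs_lt.1 h2.2
    exact ⟨by linarith, by linarith⟩
  -- strict order on the strip
  have hB : ∀ t : ℝ, 0 < t → P t → ∃ c : ℝ, 0 < c ∧ ∀ x : Euc (N + 1), |x (Fin.last N)| ≤ M →
      c ≤ u (x + t • ν) - u x ∧ c ≤ -v (x + t • ν) - -v x := by
    intro t ht hPt
    have htν : 0 < t * ν (Fin.last N) := mul_pos ht hνN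
    obtain ⟨J, hJ⟩ := exists_nat_ge ((max m₁ (-m₂) + M) / (t * ν (Fin.last N)))
    rw [div_le_iff₀ htν] at hJ
    have hS : ∀ x ∈ {x : Euc (N + 1) | |x (Fin.last N)| ≤ M},
        1 / 2 ≤ u (x + (J : ℝ) • t • ν) - u (x - (J : ℝ) • t • ν) ∧
        1 / 2 ≤ -v (x + (J : ℝ) • t • ν) - -v (x - (J : ℝ) • t • ν) := by
      intro x hx
      rw [smul_smul]
      exact htrans x (J * t) hx (by linarith)
    obtain ⟨c₁, hc₁, h₁⟩ := exists_strip_bound hu2 hLpos huL hK (t • ν) (fun x => (hPt x).1)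
      (hlapu t hPt) J _ (fun x hx => (hS x hx).1)
    obtain ⟨c₂, hc₂, h₂⟩ := exists_strip_bound hv2' hLpos
      (fun x y => by rw [neg_sub_neg, abs_sub_comm]; exact hvL x y) hK (t • ν)
      (fun x => by linarith [(hPt x).2])
      (hlapv t hPt) J _ (fun x hx => (hS x hx).2)
    exact ⟨min c₁ c₂, lt_min hc₁ hc₂, fun x hx =>
      ⟨(min_le_left _ _).trans (h₁ x hx), (min_le_right _ _).trans (h₂ x hx)⟩⟩
  -- `τ` is the least value beyond which the order holds for all translates; it must vanish
  have hAll : ∀ t : ℝ, 0 ≤ t → P t := by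
    set S : Set ℝ := {t | 0 ≤ t ∧ ∀ s, t ≤ s → P s} with hSdef
    have hbdd : BddBelow S := ⟨0, fun t ht => ht.1⟩
    have hne : S.Nonempty := by
      refine ⟨2 * M / ν (Fin.last N), by positivity, fun s hs => hA s fun x h1 h2 => ?_⟩
      rw [div_le_iff₀ hνN] at hs
      linarith
    set τ := sInf S with hτ
    have hτ0 : 0 ≤ τ := le_csInf hne fun t ht => ht.1
    have hgt : ∀ s, τ < s → P s := by
      intro s hs
      obtain ⟨t, ht, hts⟩ := exists_lt_of_csInf_lt hne hs
      exact ht.2 s hts.le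
    have huc := hu2.continuous
    have hvc := hv2.continuous
    have hPτ : P τ := by
      intro x
      have hev : ∀ᶠ s in nhdsWithin τ (Set.Ioi τ), P s := by
        filter_upwards [self_mem_nhdsWithin] with s hs using hgt s hs
      have h1 : Continuous fun s : ℝ => u (x + s • ν) := by fun_prop
      have h2 : Continuous fun s : ℝ => v (x + s • ν) := by fun_prop
      exact ⟨ge_of_tendsto (h1.continuousAt.tendsto.mono_left nhdsWithin_le_nhds)
          (hev.mono fun s hs => (hs x).1),
        le_of_tendsto (h2.continuousAt.tendsto.mono_left nhdsWithin_le_nhds)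
          (hev.mono fun s hs => (hs x).2)⟩
    have hge : ∀ s, τ ≤ s → P s := fun s hs => by
      rcases hs.eq_or_lt with h | h
      · rw [← h]; exact hPτ
      · exact hgt s h
    rcases hτ0.eq_or_lt with h0 | h0
    · intro t ht; exact hge t (h0 ▸ ht)
    exfalso
    obtain ⟨c, hc, hcs⟩ := hB τ h0 hPτ
    set t₁ := max 0 (τ - c / L) with ht₁
    have ht₁τ : t₁ < τ := max_lt h0 (by linarith [div_pos hc hLpos])
    have hmem : t₁ ∈ S := by
      refine ⟨le_max_left _ _, fun s hs => ?_⟩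
      rcases le_or_gt τ s with h | h
      · exact hge s h
      have hs0 : 0 ≤ s := (le_max_left _ _).trans hs
      refine hA s fun x h1 h2 => ?_
      have hx : |x (Fin.last N)| ≤ M := abs_le.2 ⟨h1.le, by nlinarith [mul_nonneg hs0 hνN.le]⟩
      have hcx := hcs x hx
      have hnorm : ‖(x + τ • ν) - (x + s • ν)‖ = τ - s := by
        have e : (x + τ • ν) - (x + s • ν) = (τ - s) • ν := by module
        rw [e, norm_smul, hν, Real.norm_eq_abs, abs_of_pos (by linarith), mul_one]
      have h3 := (abs_le.1 (huL (x + τ • ν) (x + s • ν))).2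
      have h4 := (abs_le.1 (hvL (x + τ • ν) (x + s • ν))).1
      rw [hnorm] at h3 h4
      have h5 : L * (τ - s) ≤ c := by
        have : τ - s ≤ c / L := by linarith [(le_max_right 0 (τ - c / L)).trans hs]
        rw [le_div_iff₀ hLpos] at this
        linarith
      exact ⟨by linarith [hcx.1], by linarith [hcx.2]⟩
    exact absurd (csInf_le hbdd hmem) (not_le.2 ht₁τ)
  -- `T` is large enough for `u` and `-v` to be seen to vary along `ν` through the origin
  obtain ⟨T, hT0, hT⟩ : ∃ T : ℝ, 0 < T ∧ max m₁ (-m₂) + M ≤ T * ν (Fin.last N) := by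
    refine ⟨max 1 ((max m₁ (-m₂) + M) / ν (Fin.last N)), lt_max_of_lt_left one_pos, ?_⟩
    rw [← div_le_iff₀ hνN]
    exact le_max_right _ _
  have h0 := htrans 0 T (by simpa using hM0) hT
  have eT : (0 : Euc (N + 1)) - T • ν + (2 * T) • ν = 0 + T • ν := by module
  intro x
  have hux := fderiv_pos_of_monotone hu2 hK hν (fun t ht x => (hAll t ht x).1)
    (fun t ht => hlapu t (hAll t ht))
    ⟨0 - T • ν, 2 * T, by linarith, by rw [eT]; linarith [h0.1]⟩ x
  have hvx := fderiv_pos_of_monotone hv2' hK hν (fun t ht x => by linarith [(hAll t ht x).2])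
    (fun t ht => hlapv t (hAll t ht))
    ⟨0 - T • ν, 2 * T, by linarith, by rw [eT]; linarith [h0.2]⟩ x
  rw [fderiv_fun_neg] at hvx
  exact ⟨hux, by simpa using hvx⟩
end
end

section
/- Let N ≥ 1 and let u, v : ℝ^N → ℝ be of class C². Then (u, v) is a classical solution of the system (P_Λ) with Λ = 3 satisfying u > 0 and v > 0 at every point of ℝ^N if and only if there exists a function w : ℝ^N → ℝ of class C² solving the Allen–Cahn equation −Δw = w − w³ pointwise on ℝ^N, with −1 < w(x) < 1 for every x ∈ ℝ^N, such that u = (1 + w)/2 and v = (1 − w)/2 = 1 − u on ℝ^N. -/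
/-!
For `Λ = 3` the nonlinearity is a perfect cube: `u³ + 3uv² + 3u²v + v³ = (u + v)³` and
`u³ - 3u²v + 3uv² - v³ = (u - v)³`. Hence `(u, v)` solves the system iff both `s = u + v` and
`w = u - v` solve the Allen–Cahn equation, and the equivalence reduces to a Liouville theorem:
an everywhere positive entire solution `s` of the Allen–Cahn equation is identically `1`.

Both bounds of the Liouville theorem come from the paraboloid `ρ(x) = K - |x - x₀|²` and the
maximum principle on `{ρ > 0}`, in the spirit of Keller and Osserman. No a priori bound on `s` is
needed.

* `le_one_of_allenCahn`: at a maximum point of `ρ s`, the first and second order conditions give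
  `ρ² Δs ≤ (8|x - x₀|² + 2nρ) s`, so that `(ρ s)² ≤ K² + (8 + 2n) K` there, and comparison with
  the centre gives `s(x₀)² ≤ 1 + (8 + 2n) / K`.
* `one_le_of_allenCahn`: at a maximum point `x₁` of `ρ² / s`, the second order condition gives
  `8|x₁ - x₀|² - 4nρ ≤ ρ² (s(x₁)² - 1)`, which forces `1 - s(x₁)² ≤ 2n(n + 2) / K`, while
  comparison with the centre gives `s(x₁) ≤ s(x₀)`.

In both cases `K → ∞` concludes.
-/

open scoped RealInnerProductSpace
open Filter

noncomputable section

/-- The second order necessary condition at a local maximum. -/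
lemma deriv_conditions_of_isLocalMax {f f' : ℝ → ℝ} {f'' : ℝ}
    (h1 : ∀ t, HasDerivAt f (f' t) t) (h2 : HasDerivAt f' f'' 0) (hm : IsLocalMax f 0) :
    f' 0 = 0 ∧ f'' ≤ 0 := by
  have h0 : f' 0 = 0 := hm.hasDerivAt_eq_zero (h1 0)
  refine ⟨h0, ?_⟩
  by_contra! hpos
  have hd : deriv f = f' := funext fun t => (h1 t).deriv
  -- If `f'' > 0`, the point is also a local minimum, so `f` is locally constant and `f'' = 0`.
  have hmin : IsLocalMin f 0 :=
    isLocalMin_of_deriv_deriv_pos (by rw [hd, h2.deriv]; exact hpos) (by rw [hd, h0])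
      (h1 0).continuousAt
  have heq : f =ᶠ[nhds 0] fun _ => f 0 := by
    filter_upwards [hm, hmin] with t ha hb
    exact le_antisymm ha hb
  have h3 := heq.deriv.deriv_eq
  rw [hd, h2.deriv] at h3
  simp at h3
  linarith

section Lines

variable {n : ℕ} {f : EuclideanSpace ℝ (Fin n) → ℝ}

lemma hasDerivAt_line (hf : Differentiable ℝ f) (x e : EuclideanSpace ℝ (Fin n)) (t : ℝ) :
    HasDerivAt (fun t : ℝ => f (x + t • e)) (fderiv ℝ f (x + t • e) e) t := by
  have hl : HasDerivAt (fun t : ℝ => x + t • e) e t := by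
    simpa using ((hasDerivAt_id t).smul_const e).const_add x
  exact (hf (x + t • e)).hasFDerivAt.comp_hasDerivAt t hl

lemma differentiable_fderiv_apply (hf : ContDiff ℝ 2 f) (e : EuclideanSpace ℝ (Fin n)) :
    Differentiable ℝ (fun y => fderiv ℝ f y e) :=
  ((hf.fderiv_right (m := 1) (by norm_num)).clm_apply contDiff_const).differentiable (by norm_num)

end Lines

/-- The Laplacian is linear on `C²` functions and kills constants. -/
lemma lap_affine {n : ℕ} {f g : EuclideanSpace ℝ (Fin n) → ℝ} (hf : ContDiff ℝ 2 f)
    (hg : ContDiff ℝ 2 g) (a b c : ℝ) (x : EuclideanSpace ℝ (Fin n)) :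
    lap n (fun y => a * f y + b * g y + c) x = a * lap n f x + b * lap n g x := by
  have hf1 : Differentiable ℝ f := hf.differentiable (by norm_num)
  have hg1 : Differentiable ℝ g := hg.differentiable (by norm_num)
  unfold lap
  rw [Finset.mul_sum, Finset.mul_sum, ← Finset.sum_add_distrib]
  refine Finset.sum_congr rfl fun i _ => ?_
  set e : EuclideanSpace ℝ (Fin n) := EuclideanSpace.single i 1
  have h1 : (fun y => fderiv ℝ (fun y => a * f y + b * g y + c) y e)
      = fun y => a * fderiv ℝ f y e + b * fderiv ℝ g y e := by
    funext y
    have h := (((hf1 y).hasFDerivAt.const_mul a).add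
      ((hg1 y).hasFDerivAt.const_mul b)).add_const c
    have h' := h.fderiv
    simp only [Pi.add_def] at h'
    rw [h']
    simp
  rw [h1]
  have h := ((differentiable_fderiv_apply hf e x).hasFDerivAt.const_mul a).add
    ((differentiable_fderiv_apply hg e x).hasFDerivAt.const_mul b)
  have h' := h.fderiv
  simp only [Pi.add_def] at h'
  rw [h']
  simp

/-- The paraboloid `K - |x - x₀|²`, positive exactly on the ball of squared radius `K`. -/
def paraboloid {n : ℕ} (K : ℝ) (x₀ x : EuclideanSpace ℝ (Fin n)) : ℝ := K - ‖x - x₀‖ ^ 2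

lemma hasDerivAt_quadratic (c a t : ℝ) :
    HasDerivAt (fun t : ℝ => c - 2 * a * t - t ^ 2) (-(2 * a) - 2 * t) t := by
  have h := (((hasDerivAt_id' t).const_mul (2 * a)).const_sub c).sub (hasDerivAt_pow 2 t)
  simpa [Pi.sub_def] using h

lemma hasDerivAt_quadratic_deriv (a : ℝ) :
    HasDerivAt (fun t : ℝ => -(2 * a) - 2 * t) (-2) 0 := by
  simpa using ((hasDerivAt_id' (0 : ℝ)).const_mul 2).const_sub (-(2 * a))

section Paraboloid

variable {n : ℕ} {K : ℝ} {x₀ : EuclideanSpace ℝ (Fin n)}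

lemma continuous_paraboloid : Continuous (paraboloid K x₀) := by
  unfold paraboloid
  fun_prop

lemma paraboloid_center : paraboloid K x₀ x₀ = K := by simp [paraboloid]

lemma paraboloid_line (x : EuclideanSpace ℝ (Fin n)) (i : Fin n) (t : ℝ) :
    paraboloid K x₀ (x + t • EuclideanSpace.single i 1)
      = paraboloid K x₀ x - 2 * (x - x₀) i * t - t ^ 2 := by
  unfold paraboloid
  have h : x + t • EuclideanSpace.single i (1 : ℝ) - x₀
      = (x - x₀) + t • EuclideanSpace.single i 1 := by abel
  rw [h, norm_add_sq_real, inner_smul_right, EuclideanSpace.inner_single_right, norm_smul]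
  simp
  ring

/-- A positive continuous weight times a power of the paraboloid attains its maximum over the
closed ball in the open ball, since the product vanishes on the boundary. -/
lemma exists_max_paraboloid (hK : 0 < K) {k : ℕ} (hk : k ≠ 0)
    {F : EuclideanSpace ℝ (Fin n) → ℝ} (hF : Continuous F) (hpos : ∀ x, 0 < F x) :
    ∃ x₁, 0 < paraboloid K x₀ x₁ ∧ ∀ x, 0 < paraboloid K x₀ x →
      paraboloid K x₀ x ^ k * F x ≤ paraboloid K x₀ x₁ ^ k * F x₁ := by
  have hball : ∀ x, x ∈ Metric.closedBall x₀ (√K) ↔ 0 ≤ paraboloid K x₀ x := by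
    intro x
    rw [mem_closedBall_iff_norm, Real.le_sqrt (norm_nonneg _) hK.le, paraboloid, sub_nonneg]
  obtain ⟨x₁, hx₁, hmax⟩ := (isCompact_closedBall x₀ (√K)).exists_isMaxOn
    ⟨x₀, (hball x₀).2 (by rw [paraboloid_center]; exact hK.le)⟩
    (f := fun x => paraboloid K x₀ x ^ k * F x)
    ((continuous_paraboloid.pow k).mul hF).continuousOn
  have hle : ∀ x, 0 < paraboloid K x₀ x →
      paraboloid K x₀ x ^ k * F x ≤ paraboloid K x₀ x₁ ^ k * F x₁ :=
    fun x hx => hmax ((hball x).2 hx.le)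
  refine ⟨x₁, lt_of_le_of_ne ((hball x₁).1 hx₁) fun h0 => ?_, hle⟩
  have h := hle x₀ (by rw [paraboloid_center]; exact hK)
  rw [← h0, paraboloid_center, zero_pow hk, zero_mul] at h
  exact absurd h (not_le.2 (mul_pos (pow_pos hK k) (hpos x₀)))

lemma eventually_paraboloid_pos {x : EuclideanSpace ℝ (Fin n)} (hx : 0 < paraboloid K x₀ x)
    (e : EuclideanSpace ℝ (Fin n)) : ∀ᶠ t : ℝ in nhds 0, 0 < paraboloid K x₀ (x + t • e) := by
  have hc : Continuous fun t : ℝ => paraboloid K x₀ (x + t • e) :=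
    continuous_paraboloid.comp (by fun_prop)
  exact hc.continuousAt.eventually (lt_mem_nhds (by simpa using hx))

end Paraboloid

lemma le_one_of_allenCahn {n : ℕ} {s : EuclideanSpace ℝ (Fin n) → ℝ} (hs : ContDiff ℝ 2 s)
    (hpos : ∀ x, 0 < s x) (heq : ∀ x, -lap n s x = s x - s x ^ 3)
    (x₀ : EuclideanSpace ℝ (Fin n)) : s x₀ ≤ 1 := by
  have key : ∀ K : ℝ, 0 < K → s x₀ ^ 2 * K ≤ K + (8 + 2 * n) := by
    intro K hK
    obtain ⟨x₁, hρ, hmax⟩ := exists_max_paraboloid (x₀ := x₀) hK one_ne_zero hs.continuous hpos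
    simp only [pow_one] at hmax
    set ρ := paraboloid K x₀ x₁ with hρdef
    have hdir : ∀ i : Fin n, ρ ^ 2 * fderiv ℝ (fun y => fderiv ℝ s y
        (EuclideanSpace.single i 1)) x₁ (EuclideanSpace.single i 1)
        ≤ 8 * s x₁ * (x₁ - x₀) i ^ 2 + 2 * s x₁ * ρ := by
      intro i
      set e : EuclideanSpace ℝ (Fin n) := EuclideanSpace.single i 1 with he
      set a := (x₁ - x₀) i
      have hP := hasDerivAt_quadratic ρ a
      have hP' := hasDerivAt_quadratic_deriv a
      have hS := hasDerivAt_line (hs.differentiable (by norm_num)) x₁ e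
      have hS' := hasDerivAt_line (differentiable_fderiv_apply hs e) x₁ e 0
      have h1 := fun t => (hP t).mul (hS t)
      have h2 := (hP'.mul (hS 0)).add ((hP 0).mul hS')
      have hm : IsLocalMax ((fun t : ℝ => ρ - 2 * a * t - t ^ 2) * fun t => s (x₁ + t • e)) 0 := by
        filter_upwards [eventually_paraboloid_pos hρ e] with t ht
        have h := hmax _ ht
        rw [paraboloid_line] at h
        simp only [Pi.mul_apply, zero_smul, add_zero, mul_zero, sub_zero, ne_eq,
          OfNat.ofNat_ne_zero, not_false_eq_true, zero_pow]
        exact h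
      obtain ⟨e1, e2⟩ := deriv_conditions_of_isLocalMax h1 h2 hm
      simp only [zero_smul, add_zero, mul_zero, sub_zero, ne_eq, OfNat.ofNat_ne_zero,
        not_false_eq_true, zero_pow] at e1 e2
      have e3 := mul_le_mul_of_nonneg_left e2 hρ.le
      -- The first order condition `ρ s' = 2 a s` eliminates `s'` from the second order one.
      linear_combination e3 + 4 * a * e1
    have hlap : ρ ^ 2 * lap n s x₁ ≤ 8 * s x₁ * ‖x₁ - x₀‖ ^ 2 + n * (2 * s x₁ * ρ) := by
      unfold lap
      rw [Finset.mul_sum]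
      refine (Finset.sum_le_sum fun i _ => hdir i).trans (le_of_eq ?_)
      rw [Finset.sum_add_distrib, ← Finset.mul_sum, EuclideanSpace.norm_sq_eq]
      simp
    have hr : ‖x₁ - x₀‖ ^ 2 = K - ρ := by rw [hρdef, paraboloid]; ring
    have hρK : ρ ≤ K := by nlinarith [sq_nonneg ‖x₁ - x₀‖]
    have hl : lap n s x₁ = s x₁ * (s x₁ ^ 2 - 1) := by linear_combination -heq x₁
    have hn : (0 : ℝ) ≤ n := Nat.cast_nonneg n
    rw [hl, hr] at hlap
    have h1 : ρ ^ 2 * (s x₁ ^ 2 - 1) ≤ 8 * (K - ρ) + 2 * n * ρ := by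
      refine le_of_mul_le_mul_left ?_ (hpos x₁)
      linarith
    have h2 : (ρ * s x₁) ^ 2 ≤ K ^ 2 + (8 + 2 * n) * K := by
      have : n * ρ ≤ n * K := mul_le_mul_of_nonneg_left hρK hn
      have : ρ ^ 2 ≤ K ^ 2 := pow_le_pow_left₀ hρ.le hρK 2
      nlinarith
    have h3 : K * s x₀ ≤ ρ * s x₁ := by
      simpa [paraboloid_center] using hmax x₀ (by rw [paraboloid_center]; exact hK)
    have h4 : (K * s x₀) ^ 2 ≤ (ρ * s x₁) ^ 2 :=
      pow_le_pow_left₀ (mul_pos hK (hpos x₀)).le h3 2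
    refine le_of_mul_le_mul_left ?_ hK
    linarith
  by_contra! h
  have hd : 0 < s x₀ ^ 2 - 1 := by nlinarith
  have hn : (0 : ℝ) ≤ n := Nat.cast_nonneg n
  have h1 := key ((9 + 2 * n) / (s x₀ ^ 2 - 1)) (by positivity)
  have h2 : (s x₀ ^ 2 - 1) * ((9 + 2 * n) / (s x₀ ^ 2 - 1)) = 9 + 2 * n := by field_simp
  linarith

lemma one_le_of_allenCahn {n : ℕ} {s : EuclideanSpace ℝ (Fin n) → ℝ} (hs : ContDiff ℝ 2 s)
    (hpos : ∀ x, 0 < s x) (heq : ∀ x, -lap n s x = s x - s x ^ 3)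
    (x₀ : EuclideanSpace ℝ (Fin n)) : 1 ≤ s x₀ := by
  have hn : (0 : ℝ) ≤ n := Nat.cast_nonneg n
  have key : ∀ K : ℝ, 0 < K → K * (1 - s x₀ ^ 2) ≤ 2 * n * (n + 2) := by
    intro K hK
    obtain ⟨x₁, hρ, hmax⟩ := exists_max_paraboloid (x₀ := x₀) hK two_ne_zero
      (F := fun x => (s x)⁻¹) (hs.continuous.inv₀ fun x => (hpos x).ne') fun x => inv_pos.2 (hpos x)
    set ρ := paraboloid K x₀ x₁ with hρdef
    set θ := ρ ^ 2 * (s x₁)⁻¹ with hθ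
    have hθs : θ * s x₁ = ρ ^ 2 := by
      rw [hθ, mul_assoc, inv_mul_cancel₀ (hpos x₁).ne', mul_one]
    have hθpos : 0 < θ := mul_pos (pow_pos hρ 2) (inv_pos.2 (hpos x₁))
    have hmax' : ∀ x, 0 < paraboloid K x₀ x → paraboloid K x₀ x ^ 2 ≤ θ * s x := by
      intro x hx
      have h := mul_le_mul_of_nonneg_right (hmax x hx) (hpos x).le
      rwa [mul_assoc, inv_mul_cancel₀ (hpos x).ne', mul_one] at h
    have hdir : ∀ i : Fin n, 8 * (x₁ - x₀) i ^ 2 - 4 * ρ ≤ θ * fderiv ℝ (fun y => fderiv ℝ s y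
        (EuclideanSpace.single i 1)) x₁ (EuclideanSpace.single i 1) := by
      intro i
      set e : EuclideanSpace ℝ (Fin n) := EuclideanSpace.single i 1 with he
      set a := (x₁ - x₀) i
      have hP := hasDerivAt_quadratic ρ a
      have hP' := hasDerivAt_quadratic_deriv a
      have hS := hasDerivAt_line (hs.differentiable (by norm_num)) x₁ e
      have hS' := hasDerivAt_line (differentiable_fderiv_apply hs e) x₁ e 0
      have h1 := fun t => ((hP t).mul (hP t)).sub ((hS t).const_mul θ)
      have h2 := ((hP'.mul (hP 0)).add ((hP 0).mul hP')).sub (hS'.const_mul θ)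
      have hm : IsLocalMax (((fun t : ℝ => ρ - 2 * a * t - t ^ 2) *
          fun t : ℝ => ρ - 2 * a * t - t ^ 2) - fun t => θ * s (x₁ + t • e)) 0 := by
        filter_upwards [eventually_paraboloid_pos hρ e] with t ht
        have h := hmax' _ ht
        rw [paraboloid_line] at h
        simp only [Pi.sub_apply, Pi.mul_apply, zero_smul, add_zero, mul_zero, sub_zero, ne_eq,
          OfNat.ofNat_ne_zero, not_false_eq_true, zero_pow]
        linarith
      have e2 := (deriv_conditions_of_isLocalMax h1 h2 hm).2
      simp only [zero_smul, add_zero, mul_zero, sub_zero, ne_eq, OfNat.ofNat_ne_zero,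
        not_false_eq_true, zero_pow] at e2
      linarith
    have hlap : 8 * ‖x₁ - x₀‖ ^ 2 - n * (4 * ρ) ≤ θ * lap n s x₁ := by
      unfold lap
      rw [Finset.mul_sum]
      refine (le_of_eq ?_).trans (Finset.sum_le_sum fun i _ => hdir i)
      rw [Finset.sum_sub_distrib, ← Finset.mul_sum, EuclideanSpace.norm_sq_eq]
      simp
    have hr : ‖x₁ - x₀‖ ^ 2 = K - ρ := by rw [hρdef, paraboloid]; ring
    have hρK : ρ ≤ K := by nlinarith [sq_nonneg ‖x₁ - x₀‖]
    have hl : θ * lap n s x₁ = ρ ^ 2 * (s x₁ ^ 2 - 1) := by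
      linear_combination -θ * heq x₁ + (s x₁ ^ 2 - 1) * hθs
    rw [hl, hr] at hlap
    have hs01 : s x₁ ≤ s x₀ := by
      have h := hmax' x₀ (by rw [paraboloid_center]; exact hK)
      rw [paraboloid_center] at h
      have hle : ρ ^ 2 ≤ K ^ 2 := pow_le_pow_left₀ hρ.le hρK 2
      exact le_of_mul_le_mul_left (by linarith) hθpos
    have hD : 1 - s x₀ ^ 2 ≤ 1 - s x₁ ^ 2 := by
      have := pow_le_pow_left₀ (hpos x₁).le hs01 2
      linarith
    refine (mul_le_mul_of_nonneg_left hD hK.le).trans ?_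
    rcases le_or_gt (1 - s x₁ ^ 2) 0 with h0 | h0
    · have : (0 : ℝ) ≤ 2 * n * (n + 2) := by positivity
      nlinarith
    · -- With `D = 1 - s(x₁)² > 0`, the bound splits into `ρ D ≤ 4n` and `K ≤ (1 + n/2) ρ`.
      have hA : ρ * (1 - s x₁ ^ 2) ≤ 4 * n := by
        refine le_of_mul_le_mul_left ?_ hρ
        nlinarith
      have hB : K ≤ (1 + n / 2) * ρ := by
        have := mul_pos (pow_pos hρ 2) h0
        linarith
      calc K * (1 - s x₁ ^ 2) ≤ (1 + n / 2) * ρ * (1 - s x₁ ^ 2) :=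
            mul_le_mul_of_nonneg_right hB h0.le
        _ = (1 + n / 2) * (ρ * (1 - s x₁ ^ 2)) := by ring
        _ ≤ (1 + n / 2) * (4 * n) := mul_le_mul_of_nonneg_left hA (by positivity)
        _ = 2 * n * (n + 2) := by ring
  by_contra! h
  have hd : 0 < 1 - s x₀ ^ 2 := by nlinarith [hpos x₀]
  have h1 := key ((2 * n * (n + 2) + 1) / (1 - s x₀ ^ 2)) (by positivity)
  have h2 : (2 * n * (n + 2) + 1) / (1 - s x₀ ^ 2) * (1 - s x₀ ^ 2) = 2 * n * (n + 2) + 1 := by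
    field_simp
  linarith

/-- Proposition 6.3: characterization of positive solutions of
the system with `Λ = 3` in terms of a single solution of the Allen–Cahn
equation with values in `(-1, 1)`. -/
theorem stmt_19 (N : ℕ)
    (u v : EuclideanSpace ℝ (Fin (N + 1)) → ℝ)
    (hu : ContDiff ℝ 2 u) (hv : ContDiff ℝ 2 v) :
    (IsSolution (N + 1) 3 u v ∧ (∀ x, 0 < u x) ∧ (∀ x, 0 < v x)) ↔
    ∃ w : EuclideanSpace ℝ (Fin (N + 1)) → ℝ,
      ContDiff ℝ 2 w ∧
      (∀ x, -lap (N + 1) w x = w x - (w x) ^ 3) ∧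
      (∀ x, -1 < w x ∧ w x < 1) ∧
      (∀ x, u x = (1 + w x) / 2 ∧ v x = (1 - w x) / 2) := by
  constructor
  · rintro ⟨⟨-, -, equ, eqv⟩, hup, hvp⟩
    have hsum : ∀ x, u x + v x = 1 := by
      have hs : ContDiff ℝ 2 (fun y => 1 * u y + 1 * v y + 0) := by fun_prop
      have hp : ∀ x, 0 < 1 * u x + 1 * v x + 0 := fun x => by linarith [hup x, hvp x]
      have he : ∀ x, -lap (N + 1) (fun y => 1 * u y + 1 * v y + 0) x
          = (1 * u x + 1 * v x + 0) - (1 * u x + 1 * v x + 0) ^ 3 := by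
        intro x
        rw [lap_affine hu hv]
        linear_combination equ x + eqv x
      intro x
      have h1 := le_one_of_allenCahn hs hp he x
      have h2 := one_le_of_allenCahn hs hp he x
      linarith
    refine ⟨fun y => 1 * u y + (-1) * v y + 0, by fun_prop, fun x => ?_, fun x => ?_, fun x => ?_⟩
    · rw [lap_affine hu hv]
      linear_combination equ x - eqv x
    · constructor <;> linarith [hsum x, hup x, hvp x]
    · constructor <;> linarith [hsum x]
  · rintro ⟨w, hw, heq, hb, huv⟩
    have hu' : u = fun y => (1 / 2) * w y + 0 * w y + 1 / 2 := by
      funext y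
      rw [(huv y).1]
      ring
    have hv' : v = fun y => (-1 / 2) * w y + 0 * w y + 1 / 2 := by
      funext y
      rw [(huv y).2]
      ring
    refine ⟨⟨hu, hv, fun x => ?_, fun x => ?_⟩, fun x => ?_, fun x => ?_⟩
    · rw [(huv x).1, (huv x).2, hu', lap_affine hw hw]
      linear_combination (1 / 2) * heq x
    · rw [(huv x).1, (huv x).2, hv', lap_affine hw hw]
      linear_combination (-1 / 2) * heq x
    · rw [(huv x).1]
      linarith [(hb x).1]
    · rw [(huv x).2]
      linarith [(hb x).2]
end
end
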